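/- There is an absolute constant C > 0 such that for all real x ≥ 2, the number of ordered triples of primes (p, q, r) with lcm(p−1, q−1, r−1) ≤ x is at most C·x·(log x)^3. Equivalently, S_3(x) := (1/x)·Σ_{lcm(p−1,q−1,r−1) ≤ x} 1 ≤ C·(log x)^3, where the sum is over ordered triples of primes (p, q, r). -/

import Mathlib

open Filter Real


lemma sv_moment {T : Type*} (X : Finset T) (b : ℕ → T → Prop) [∀ p x, Decidable (b p x)]
    (δ α β : ℕ → ℝ) (R : ℝ) (Q : Finset ℕ)
    (hR : ∀ r ⊆ Q, |((X.filter (fun x => ∀ p ∈ r, b p x)).card : ℝ) - X.card * ∏ p ∈ r, δ p| ≤ R) :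
    |∑ x ∈ X, ∏ p ∈ Q, (α p + β p * (if b p x then 1 else 0)) - X.card * ∏ p ∈ Q, (α p + β p * δ p)|
      ≤ R * ∏ p ∈ Q, (|α p| + |β p|) := by
  have h1 : ∑ x ∈ X, ∏ p ∈ Q, (α p + β p * (if b p x then (1:ℝ) else 0)) =
      ∑ r ∈ Q.powerset, (∏ p ∈ Q \ r, α p) * (∏ p ∈ r, β p) *
        ((X.filter (fun x => ∀ p ∈ r, b p x)).card : ℝ) := by
    have : ∀ x, ∏ p ∈ Q, (α p + β p * (if b p x then (1:ℝ) else 0)) =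
        ∑ r ∈ Q.powerset, (∏ p ∈ Q \ r, α p) * (∏ p ∈ r, β p) * (if ∀ p ∈ r, b p x then 1 else 0) := by
      intro x
      simp_rw [add_comm (α _)]
      rw [Finset.prod_add]
      refine Finset.sum_congr rfl fun r hr => ?_
      rw [Finset.prod_mul_distrib, Finset.prod_ite_zero]
      simp only [Finset.prod_const_one]
      ring
    simp_rw [this]
    rw [Finset.sum_comm]
    refine Finset.sum_congr rfl fun r hr => ?_
    rw [← Finset.mul_sum]
    simp
  have h2 : ∏ p ∈ Q, (α p + β p * δ p) = ∑ r ∈ Q.powerset, (∏ p ∈ Q \ r, α p) * (∏ p ∈ r, β p) *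
        (∏ p ∈ r, δ p) := by
    simp_rw [add_comm (α _)]
    rw [Finset.prod_add]
    refine Finset.sum_congr rfl fun r hr => ?_
    rw [Finset.prod_mul_distrib]
    ring
  have h3 : ∏ p ∈ Q, (|α p| + |β p|) = ∑ r ∈ Q.powerset, (∏ p ∈ Q \ r, |α p|) * (∏ p ∈ r, |β p|) := by
    simp_rw [add_comm (|α _|)]
    rw [Finset.prod_add]
    refine Finset.sum_congr rfl fun r hr => ?_
    ring
  rw [h1, h2, h3, Finset.mul_sum, Finset.mul_sum, ← Finset.sum_sub_distrib]
  refine (Finset.abs_sum_le_sum_abs _ _).trans (Finset.sum_le_sum fun r hr => ?_)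
  have := hR r (Finset.mem_powerset.1 hr)
  have e : (∏ p ∈ Q \ r, α p) * (∏ p ∈ r, β p) * ((X.filter (fun x => ∀ p ∈ r, b p x)).card : ℝ) -
      X.card * ((∏ p ∈ Q \ r, α p) * (∏ p ∈ r, β p) * ∏ p ∈ r, δ p) =
      ((∏ p ∈ Q \ r, α p) * (∏ p ∈ r, β p)) *
      (((X.filter (fun x => ∀ p ∈ r, b p x)).card : ℝ) - X.card * ∏ p ∈ r, δ p) := by ring
  rw [e, abs_mul, abs_mul, Finset.abs_prod, Finset.abs_prod, mul_comm R]
  gcongr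

lemma sv_aux (a b c : Prop) [Decidable a] [Decidable b] [Decidable c] (g : ℝ) (h : a ∨ b) :
    (if a then (if c then (-1 : ℝ) else g) else 1) * (if b then (if c then (-1 : ℝ) else g) else 1) =
    (if a ∧ b then g ^ 2 else g) + (if a ∧ b then 1 - g ^ 2 else -(1 + g)) * (if c then 1 else 0) := by
  by_cases ha : a <;> by_cases hb : b <;> by_cases hc : c <;> (simp [ha, hb, hc] at h ⊢; try ring)

theorem sv_abstract {T : Type*} (X : Finset T) (b : ℕ → T → Prop) [∀ p x, Decidable (b p x)]
    (P : Finset ℕ) (D : Finset (Finset ℕ)) (δ : ℕ → ℝ) (R B : ℝ) (hR0 : 0 ≤ R)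
    (hD : ∀ s ∈ D, s ⊆ P) (hδ0 : ∀ p ∈ P, 0 ≤ δ p) (hδ1 : ∀ p ∈ P, δ p < 1)
    (hR : ∀ s ∈ D, ∀ t ∈ D, ∀ r ⊆ s ∪ t,
      |((X.filter (fun x => ∀ p ∈ r, b p x)).card : ℝ) - X.card * ∏ p ∈ r, δ p| ≤ R)
    (hB : ∀ s ∈ D, ∀ t ∈ D, ∏ p ∈ s ∪ t, (2 / (1 - δ p) ^ 2) ≤ B) (G : ℝ)
    (hG : G = ∑ s ∈ D, ∏ p ∈ s, (δ p / (1 - δ p))) :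
    G ^ 2 * ((X.filter (fun x => ∀ p ∈ P, ¬ b p x)).card : ℝ) ≤ X.card * G + (D.card : ℝ) ^ 2 * (R * B) := by
  set g : ℕ → ℝ := fun p => δ p / (1 - δ p) with hg
  set f : ℕ → T → ℝ := fun p x => if b p x then -1 else g p with hf
  set W : T → ℝ := fun x => ∑ s ∈ D, ∏ p ∈ s, f p x with hW
  have h1 : G ^ 2 * ((X.filter (fun x => ∀ p ∈ P, ¬ b p x)).card : ℝ) ≤ ∑ x ∈ X, W x ^ 2 := by
    have : ∑ x ∈ X.filter (fun x => ∀ p ∈ P, ¬ b p x), W x ^ 2 ≤ ∑ x ∈ X, W x ^ 2 :=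
      Finset.sum_le_sum_of_subset_of_nonneg (Finset.filter_subset _ _) (fun _ _ _ => sq_nonneg _)
    refine le_trans (le_of_eq ?_) this
    rw [Finset.sum_congr rfl (g := fun _ => G ^ 2)]
    · simp [mul_comm]
    · intro x hx
      have hx := (Finset.mem_filter.1 hx).2
      have : W x = G := by
        rw [hG]
        refine Finset.sum_congr rfl fun s hs => Finset.prod_congr rfl fun p hp => ?_
        simp [hf, hx p (hD s hs hp), hg]
      rw [this]
  refine h1.trans ?_
  have h2 : ∑ x ∈ X, W x ^ 2 = ∑ s ∈ D, ∑ t ∈ D, ∑ x ∈ X, (∏ p ∈ s, f p x) * ∏ p ∈ t, f p x := by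
    simp_rw [hW, sq, Finset.sum_mul_sum]
    rw [Finset.sum_comm]
    refine Finset.sum_congr rfl fun s hs => ?_
    rw [Finset.sum_comm]
  have key : ∀ s ∈ D, ∀ t ∈ D, ∑ x ∈ X, (∏ p ∈ s, f p x) * ∏ p ∈ t, f p x ≤
      (if s = t then X.card * ∏ p ∈ s, g p else 0) + R * B := by
    intro s hs t ht
    set α : ℕ → ℝ := fun p => if p ∈ s ∧ p ∈ t then g p ^ 2 else g p with hα
    set β : ℕ → ℝ := fun p => if p ∈ s ∧ p ∈ t then 1 - g p ^ 2 else -(1 + g p) with hβ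
    have e1 : ∀ x, (∏ p ∈ s, f p x) * ∏ p ∈ t, f p x =
        ∏ p ∈ s ∪ t, (α p + β p * (if b p x then 1 else 0)) := by
      intro x
      rw [Finset.prod_subset_one_on_sdiff (s₁ := s) (s₂ := s ∪ t) (f := fun p => f p x)
        (g := fun p => if p ∈ s then f p x else 1) Finset.subset_union_left
        (by intro p hp; simp at hp; simp [hp]) (by intro p hp; simp [hp]),
        Finset.prod_subset_one_on_sdiff (s₁ := t) (s₂ := s ∪ t) (f := fun p => f p x)
        (g := fun p => if p ∈ t then f p x else 1) Finset.subset_union_right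
        (by intro p hp; simp at hp; simp [hp]) (by intro p hp; simp [hp]), ← Finset.prod_mul_distrib]
      refine Finset.prod_congr rfl fun p hp => ?_
      exact sv_aux _ _ _ (g p) (Finset.mem_union.1 hp)
    have hm := sv_moment X b δ α β R (s ∪ t) (hR s hs t ht)
    simp_rw [e1]
    have hP : ∀ p ∈ s ∪ t, p ∈ P := fun p hp => by
      rcases Finset.mem_union.1 hp with h | h
      exacts [hD s hs h, hD t ht h]
    have e2 : ∏ p ∈ s ∪ t, (|α p| + |β p|) ≤ B := by
      refine le_trans (Finset.prod_le_prod (fun _ _ => by positivity) fun p hp => ?_) (hB s hs t ht)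
      have h0 := hδ0 p (hP p hp)
      have h1 := hδ1 p (hP p hp)
      have hg1 : 1 / (1 - δ p) = 1 + g p := by
        simp only [hg]; field_simp [(by linarith : (1 - δ p) ≠ 0)]; ring
      have hg0 : 0 ≤ g p := div_nonneg h0 (by linarith)
      have : 2 / (1 - δ p) ^ 2 = 2 * (1 + g p) ^ 2 := by rw [← hg1, div_pow, one_pow, mul_one_div]
      rw [this]
      simp only [hα, hβ]
      split_ifs
      · rw [abs_of_nonneg (by positivity)]
        have : |1 - g p ^ 2| ≤ 1 + g p ^ 2 := by
          rw [abs_le]; constructor <;> nlinarith [sq_nonneg (g p)]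
        nlinarith
      · rw [abs_of_nonneg hg0, abs_neg, abs_of_nonneg (by positivity)]
        nlinarith
    have e3 : (X.card : ℝ) * ∏ p ∈ s ∪ t, (α p + β p * δ p) = if s = t then X.card * ∏ p ∈ s, g p else 0 := by
      have loc1 : ∀ p ∈ P, g p ^ 2 + (1 - g p ^ 2) * δ p = g p := by
        intro p hp
        have h1 := hδ1 p hp
        simp only [hg]; field_simp [(by linarith : (1 - δ p) ≠ 0)]; ring
      have loc2 : ∀ p ∈ P, g p + (-(1 + g p)) * δ p = 0 := by
        intro p hp
        have h1 := hδ1 p hp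
        simp only [hg]; field_simp [(by linarith : (1 - δ p) ≠ 0)]; ring
      split_ifs with hst
      · subst hst
        rw [Finset.union_self]
        congr 1
        refine Finset.prod_congr rfl fun p hp => ?_
        simp only [hα, hβ, hp, and_self, if_true]
        exact loc1 p (hD s hs hp)
      · have : ∃ p ∈ s ∪ t, ¬ (p ∈ s ∧ p ∈ t) := by
          by_contra hcon
          push Not at hcon
          apply hst
          ext p
          constructor
          · intro h; exact (hcon p (Finset.mem_union_left _ h)).2
          · intro h; exact (hcon p (Finset.mem_union_right _ h)).1
        obtain ⟨p, hp, hn⟩ := this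
        rw [Finset.prod_eq_zero hp, mul_zero]
        simp only [hα, hβ, hn, if_false]
        exact loc2 p (hP p hp)
    rw [e3] at hm
    have := (abs_le.1 hm).2
    have := mul_le_mul_of_nonneg_left e2 hR0
    linarith
  rw [h2]
  refine (Finset.sum_le_sum fun s hs => Finset.sum_le_sum fun t ht => key s hs t ht).trans ?_
  simp_rw [Finset.sum_add_distrib, Finset.sum_ite_eq]
  rw [Finset.sum_ite_mem, Finset.inter_self, ← Finset.mul_sum, ← hG]
  simp
  ring_nf
  rfl


/-- product of the three forms `α i * ∏ x + 1`. -/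
def Fe {R : Type*} [CommSemiring R] {ι : Type} (α : Fin 3 → ℕ) (V : Fin 3 → Finset ι) (x : ι → R) : R :=
  ∏ i, ((α i : R) * ∏ s ∈ V i, x s + 1)

lemma Fe_map {R S : Type*} [CommSemiring R] [CommSemiring S] (f : R →+* S) {ι : Type}
    (α : Fin 3 → ℕ) (V : Fin 3 → Finset ι) (x : ι → R) : f (Fe α V x) = Fe α V (fun i => f (x i)) := by
  simp [Fe, map_prod]

noncomputable def rho {ι : Type} (α : Fin 3 → ℕ) (V : Fin 3 → Finset ι) (r : ℕ) : ℕ :=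
  Nat.card {c : ι → ZMod r // Fe α V c = 0}

lemma rho_mul {ι : Type} (α : Fin 3 → ℕ) (V : Fin 3 → Finset ι) {m n : ℕ}
    (h : m.Coprime n) : rho α V (m * n) = rho α V m * rho α V n := by
  unfold rho
  rw [← Nat.card_prod]
  refine Nat.card_congr ?_
  refine (Equiv.subtypeEquiv ((Equiv.arrowCongr (Equiv.refl ι) (ZMod.chineseRemainder h).toEquiv).trans
      (Equiv.arrowProdEquivProdArrow ι (fun _ => ZMod m) (fun _ => ZMod n)))
      (q := fun c => Fe α V c.1 = 0 ∧ Fe α V c.2 = 0) ?_).trans (Equiv.subtypeProdEquivProd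
      (p := fun c : ι → ZMod m => Fe α V c = 0) (q := fun c : ι → ZMod n => Fe α V c = 0))
  intro c
  rw [← (ZMod.chineseRemainder h).map_eq_zero_iff, Prod.ext_iff]
  have h1 := Fe_map ((RingHom.fst (ZMod m) (ZMod n)).comp (ZMod.chineseRemainder h).toRingHom) α V c
  have h2 := Fe_map ((RingHom.snd (ZMod m) (ZMod n)).comp (ZMod.chineseRemainder h).toRingHom) α V c
  simp at h1 h2
  simp [h1, h2, Equiv.arrowProdEquivProdArrow, Equiv.arrowCongr]

lemma rho_one {ι : Type} (α : Fin 3 → ℕ) (V : Fin 3 → Finset ι) : rho α V 1 = 1 := by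
  unfold rho
  rw [Nat.card_eq_one_iff_unique]
  refine ⟨⟨fun a b => Subtype.ext (Subsingleton.elim _ _)⟩, ⟨⟨fun _ => 0, Subsingleton.elim _ _⟩⟩⟩

lemma rho_prod {ι : Type} (α : Fin 3 → ℕ) (V : Fin 3 → Finset ι) (s : Finset ℕ)
    (hs : ∀ p ∈ s, p.Prime) : rho α V (∏ p ∈ s, p) = ∏ p ∈ s, rho α V p := by
  induction s using Finset.induction_on with
  | empty => simp [rho_one]
  | insert a s ha ih =>
    rw [Finset.prod_insert ha, Finset.prod_insert ha, rho_mul, ih]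
    · intro p hp; exact hs p (Finset.mem_insert_of_mem hp)
    · refine Nat.Coprime.prod_right fun p hp => ?_
      refine (Nat.coprime_primes (hs a (Finset.mem_insert_self _ _)) (hs p (Finset.mem_insert_of_mem hp))).2 ?_
      rintro rfl; exact ha hp

lemma cnt_Ico (N r : ℕ) (hr : 0 < r) (c : ZMod r) :
    |(((Finset.Ico N (2 * N)).filter (fun n : ℕ => (n : ZMod r) = c)).card : ℝ) - N / r| ≤ 1 := by
  have : NeZero r := ⟨hr.ne'⟩
  have h := Nat.Ico_filter_modEq_card N (2 * N) hr c.val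
  have e : (Finset.Ico N (2 * N)).filter (fun n : ℕ => (n : ZMod r) = c) =
      (Finset.Ico N (2 * N)).filter (fun n : ℕ => n ≡ c.val [MOD r]) := by
    refine Finset.filter_congr fun n _ => ?_
    rw [← ZMod.natCast_eq_natCast_iff, ZMod.natCast_zmod_val]
  rw [e]
  have hr' : (0 : ℚ) < r := by exact_mod_cast hr
  have e2 : ((2 * N : ℕ) - (c.val : ℚ)) / r = (N - c.val) / r + N / r := by push_cast; field_simp; ring
  rw [e2] at h
  set A : ℚ := (N - c.val) / r
  set B : ℚ := (N : ℚ) / r with hB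
  have hB0 : 0 ≤ B := by positivity
  have a1 := Int.le_ceil (A + B)
  have a2 := Int.ceil_lt_add_one (A + B)
  have a3 := Int.le_ceil A
  have a4 := Int.ceil_lt_add_one A
  set x := ((Finset.Ico N (2 * N)).filter (fun n : ℕ => n ≡ c.val [MOD r])).card
  have hmono : ⌈A⌉ ≤ ⌈A + B⌉ := Int.ceil_mono (by linarith)
  rw [max_eq_left (by linarith)] at h
  have h' : (x : ℚ) = ⌈A + B⌉ - ⌈A⌉ := by exact_mod_cast h
  have : |(x : ℚ) - B| ≤ 1 := by rw [abs_le]; constructor <;> linarith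
  rw [hB] at this
  have h2 : ((|(x : ℚ) - N / r| : ℚ) : ℝ) ≤ ((1 : ℚ) : ℝ) := Rat.cast_le.2 this
  push_cast at h2
  exact h2

lemma prod_near {ι : Type} [Fintype ι] (a b : ι → ℝ) (t : ℝ) (ht0 : 0 ≤ t) (ht : t ≤ 1)
    (hb : ∀ i, 0 ≤ b i) (h : ∀ i, |a i - b i| ≤ t * b i) :
    |∏ i, a i - ∏ i, b i| ≤ 2 ^ (Fintype.card ι) * t * ∏ i, b i := by
  have key : ∀ s : Finset ι, |∏ i ∈ s, a i - ∏ i ∈ s, b i| ≤ (2 ^ s.card - 1) * t * ∏ i ∈ s, b i := by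
    intro s
    classical
    induction s using Finset.induction_on with
    | empty => simp
    | insert i s hi ih =>
      rw [Finset.prod_insert hi, Finset.prod_insert hi, Finset.card_insert_of_notMem hi]
      set A := ∏ i ∈ s, a i
      have hB0 : 0 ≤ ∏ i ∈ s, b i := Finset.prod_nonneg fun i _ => hb i
      set B := ∏ i ∈ s, b i
      have e : a i * A - b i * B = a i * (A - B) + (a i - b i) * B := by ring
      have ha : |a i| ≤ (1 + t) * b i := by
        have := abs_le.1 (h i)
        rw [abs_le]; constructor <;> nlinarith [hb i]
      rw [e]
      refine (abs_add_le _ _).trans ?_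
      rw [abs_mul, abs_mul, abs_of_nonneg hB0]
      have h1 : |a i| * |A - B| ≤ ((1 + t) * b i) * ((2 ^ s.card - 1) * t * B) := by
        gcongr
        have := hb i; positivity
      have h2 : |a i - b i| * B ≤ t * b i * B := by gcongr; exact h i
      have h3 : (1:ℝ) ≤ 2 ^ s.card := one_le_pow₀ (by norm_num)
      have h4 : 0 ≤ b i * B := mul_nonneg (hb i) hB0
      have h5 : (1 + t) * (2 ^ s.card - 1) * t + t ≤ (2 ^ (s.card + 1) - 1) * t := by
        rw [pow_succ]
        nlinarith [mul_nonneg (mul_nonneg (sub_nonneg.2 h3) ht0) (sub_nonneg.2 ht)]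
      nlinarith [mul_le_mul_of_nonneg_right h5 h4]
  refine (key Finset.univ).trans ?_
  have : 0 ≤ ∏ i, b i := Finset.prod_nonneg fun i _ => hb i
  rw [Finset.card_univ]
  gcongr
  linarith

lemma box_equi {ι : Type} [Fintype ι] [DecidableEq ι] (α : Fin 3 → ℕ) (V : Fin 3 → Finset ι)
    (N : ι → ℕ) (M r : ℕ) (hr : 0 < r) (hrM : r ≤ M) (hN : ∀ i, M ≤ N i) :
    |(((Fintype.piFinset (fun i => Finset.Ico (N i) (2 * N i))).filter (fun x => r ∣ Fe α V x)).card : ℝ)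
      - (∏ i, (N i : ℝ)) * (rho α V r / (r : ℝ) ^ Fintype.card ι)| ≤
      (∏ i, (N i : ℝ)) * (2 ^ Fintype.card ι * (r / M)) := by
  classical
  have : NeZero r := ⟨hr.ne'⟩
  set X := Fintype.piFinset (fun i => Finset.Ico (N i) (2 * N i))
  set Z : Finset (ι → ZMod r) := Finset.univ.filter (fun c => Fe α V c = 0) with hZ
  have hrho : rho α V r = Z.card := by
    unfold rho; rw [Nat.card_eq_fintype_card, Fintype.card_subtype]
  have h1 : (X.filter (fun x => r ∣ Fe α V x)).card =
      ∑ c ∈ Z, ∏ i, ((Finset.Ico (N i) (2 * N i)).filter (fun n : ℕ => (n : ZMod r) = c i)).card := by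
    rw [Finset.card_eq_sum_card_fiberwise (f := fun (x : ι → ℕ) (i : ι) => (x i : ZMod r)) (t := Z)]
    · refine Finset.sum_congr rfl fun c hc => ?_
      rw [← Fintype.card_piFinset]
      congr 1
      ext x
      simp only [Finset.mem_filter, Fintype.mem_piFinset, X]
      have hc : Fe α V c = 0 := by simpa [hZ] using hc
      constructor
      · rintro ⟨⟨h1, h2⟩, h3⟩ i
        exact ⟨h1 i, congrFun h3 i⟩
      · intro h
        have h3 : (fun i => (x i : ZMod r)) = c := funext fun i => (h i).2
        refine ⟨⟨fun i => (h i).1, ?_⟩, h3⟩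
        rw [← ZMod.natCast_eq_zero_iff]
        have := Fe_map (Nat.castRingHom (ZMod r)) α V x
        simp only [Nat.coe_castRingHom] at this
        rw [this, h3, hc]
    · intro x hx
      have hx := (Finset.mem_filter.1 hx).2
      rw [← ZMod.natCast_eq_zero_iff] at hx
      have := Fe_map (Nat.castRingHom (ZMod r)) α V x
      simp only [Nat.coe_castRingHom] at this
      simp [hZ, ← this, hx]
  have hr' : (0:ℝ) < r := by exact_mod_cast hr
  have hM' : (0:ℝ) < M := by exact_mod_cast (lt_of_lt_of_le hr hrM)
  have h2 : ∀ c : ι → ZMod r, |∏ i, (((Finset.Ico (N i) (2 * N i)).filter (fun n : ℕ => (n : ZMod r) = c i)).card : ℝ)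
      - ∏ i, ((N i : ℝ) / r)| ≤ 2 ^ Fintype.card ι * (r / M) * ∏ i, ((N i : ℝ) / r) := by
    intro c
    refine prod_near _ _ _ (by positivity) ?_ (fun i => by positivity) fun i => ?_
    · rw [div_le_one hM']; exact_mod_cast hrM
    · refine (cnt_Ico (N i) r hr (c i)).trans ?_
      have : (M : ℝ) ≤ N i := by exact_mod_cast hN i
      field_simp
      exact this
  have h3 : (∏ i, ((N i : ℝ) / r)) = (∏ i, (N i : ℝ)) / r ^ Fintype.card ι := by
    rw [Finset.prod_div_distrib]; simp
  have h4 : (Z.card : ℝ) ≤ (r : ℝ) ^ Fintype.card ι := by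
    have : Z.card ≤ r ^ Fintype.card ι := by
      refine (Finset.card_le_univ _).trans ?_
      simp
    exact_mod_cast this
  rw [h1, hrho]
  push_cast
  have e : (∏ i, (N i : ℝ)) * (Z.card / (r : ℝ) ^ Fintype.card ι) = ∑ c ∈ Z, ∏ i, ((N i : ℝ) / r) := by
    rw [h3]; simp; ring
  rw [e, ← Finset.sum_sub_distrib]
  refine (Finset.abs_sum_le_sum_abs _ _).trans ?_
  refine (Finset.sum_le_sum fun c _ => h2 c).trans ?_
  rw [Finset.sum_const, nsmul_eq_mul, h3]
  have hP : 0 ≤ ∏ i, (N i : ℝ) := Finset.prod_nonneg fun i _ => by positivity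
  have : (Z.card : ℝ) * (2 ^ Fintype.card ι * (r / M) * ((∏ i, (N i : ℝ)) / r ^ Fintype.card ι)) =
    (Z.card / r ^ Fintype.card ι) * ((∏ i, (N i : ℝ)) * (2 ^ Fintype.card ι * (r / M))) := by ring
  rw [this]
  refine mul_le_of_le_one_left (by positivity) ?_
  rw [div_le_one (by positivity)]
  exact h4


lemma sum_le_inj {A B : Type*} (s : Finset A) (t : Finset B) (f : A → ℝ) (h : B → ℝ) (φ : A → B)
    (hφ : ∀ a ∈ s, φ a ∈ t) (hinj : Set.InjOn φ s) (hle : ∀ a ∈ s, f a ≤ h (φ a))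
    (h0 : ∀ b ∈ t, 0 ≤ h b) : ∑ a ∈ s, f a ≤ ∑ b ∈ t, h b := by
  classical
  refine (Finset.sum_le_sum hle).trans ?_
  rw [← Finset.sum_image (f := h) (g := φ) hinj]
  refine Finset.sum_le_sum_of_subset_of_nonneg ?_ (fun b hb _ => h0 b hb)
  intro b hb
  obtain ⟨a, ha, rfl⟩ := Finset.mem_image.1 hb
  exact hφ a ha

def PP (z : ℕ) : Finset ℕ := (Finset.range (z + 1)).filter Nat.Prime

def Dz (P : Finset ℕ) (z : ℕ) : Finset (Finset ℕ) := P.powerset.filter (fun s => ∏ p ∈ s, p ≤ z)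

noncomputable def Hk (k : ℝ) (z : ℕ) : ℝ := ∑ s ∈ Dz (PP z) z, ∏ p ∈ s, (k / p)

lemma mem_PP {z p : ℕ} : p ∈ PP z ↔ p ≤ z ∧ p.Prime := by
  simp [PP]

lemma mem_Dz {P s : Finset ℕ} {z : ℕ} : s ∈ Dz P z ↔ s ⊆ P ∧ ∏ p ∈ s, p ≤ z := by
  simp [Dz]

lemma sum_inv_sq (z : ℕ) : ∑ t ∈ Finset.Icc 1 z, 1 / (t : ℝ) ^ 2 ≤ 2 := by
  have key : ∀ z : ℕ, ∑ t ∈ Finset.Icc 1 z, 1 / (t : ℝ) ^ 2 ≤ 2 - 1 / (z : ℝ) := by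
    intro z
    induction z with
    | zero => simp
    | succ n ih =>
      rw [Finset.sum_Icc_succ_top (by omega)]
      rcases Nat.eq_zero_or_pos n with rfl | hn
      · norm_num
      have hn' : (0:ℝ) < n := by exact_mod_cast hn
      push_cast
      have : 1 / ((n : ℝ) + 1) ^ 2 ≤ 1 / n - 1 / (n + 1) := by
        rw [div_sub_div _ _ (by positivity) (by positivity), div_le_div_iff₀ (by positivity) (by positivity)]
        nlinarith
      linarith
  have h := key z
  have : (0:ℝ) ≤ 1 / (z : ℝ) := by positivity
  linarith

lemma H1_lower (z : ℕ) : Real.log z ≤ 2 * Hk 1 z := by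
  rcases Nat.eq_zero_or_pos z with rfl | hz
  · have : 0 ≤ Hk 1 0 := Finset.sum_nonneg fun s _ => Finset.prod_nonneg fun p _ => by positivity
    simpa using this
  have h1 : Real.log z ≤ ∑ n ∈ Finset.Icc 1 z, 1 / (n : ℝ) := by
    have := log_add_one_le_harmonic z
    rw [harmonic_eq_sum_Icc] at this
    push_cast at this
    have h2 : Real.log z ≤ Real.log (z + 1) := Real.log_le_log (by exact_mod_cast hz) (by linarith)
    simp only [one_div]
    exact h2.trans this
  have h2 : ∑ n ∈ Finset.Icc 1 z, 1 / (n : ℝ) ≤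
      ∑ x ∈ Dz (PP z) z ×ˢ Finset.Icc 1 z, (∏ p ∈ x.1, (1 / (p : ℝ))) * (1 / (x.2 : ℝ) ^ 2) := by
    have hex : ∀ n : ℕ, ∃ x : Finset ℕ × ℕ, 1 ≤ n → x.2 ^ 2 * (∏ p ∈ x.1, p) = n ∧ ∀ p ∈ x.1, p.Prime := by
      intro n
      obtain ⟨a, b, hab, hsq⟩ := Nat.sq_mul_squarefree n
      refine ⟨(a.primeFactors, b), fun hn => ⟨?_, fun p hp => Nat.prime_of_mem_primeFactors hp⟩⟩
      simp only
      rw [Nat.prod_primeFactors_of_squarefree hsq, hab]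
    choose φ hφ using hex
    refine sum_le_inj _ _ _ _ φ ?_ ?_ ?_ ?_
    · intro n hn
      obtain ⟨hn1, hn2⟩ := Finset.mem_Icc.1 hn
      obtain ⟨e, hp⟩ := hφ n hn1
      have hb0 : 0 < (φ n).2 := by
        rcases Nat.eq_zero_or_pos (φ n).2 with h | h
        · rw [h] at e; simp at e; omega
        · exact h
      have ha0 : 0 < ∏ p ∈ (φ n).1, p := Finset.prod_pos fun p h => (hp p h).pos
      have h1 : ∏ p ∈ (φ n).1, p ≤ z := by
        refine le_trans ?_ hn2
        conv_rhs => rw [← e]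
        exact Nat.le_mul_of_pos_left _ (by positivity)
      refine Finset.mem_product.2 ⟨mem_Dz.2 ⟨fun p h => mem_PP.2 ⟨?_, hp p h⟩, h1⟩, Finset.mem_Icc.2 ⟨hb0, ?_⟩⟩
      · exact (Nat.le_of_dvd ha0 (Finset.dvd_prod_of_mem _ h)).trans h1
      · refine le_trans ?_ hn2
        conv_rhs => rw [← e]
        nlinarith [Nat.mul_le_mul hb0 ha0]
    · intro n hn m hm h
      rw [← (hφ n (Finset.mem_Icc.1 hn).1).1, ← (hφ m (Finset.mem_Icc.1 hm).1).1, h]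
    · intro n hn
      have e := (hφ n (Finset.mem_Icc.1 hn).1).1
      conv_lhs => rw [← e]
      push_cast
      simp [mul_comm]
    · intro x _
      exact mul_nonneg (Finset.prod_nonneg fun p _ => by positivity) (by positivity)
  rw [Finset.sum_product] at h2
  simp only [← Finset.mul_sum, ← Finset.sum_mul] at h2
  have h3 := sum_inv_sq z
  have h4 : 0 ≤ Hk 1 z := Finset.sum_nonneg fun s _ => Finset.prod_nonneg fun p _ => by positivity
  have h5 : (∑ s ∈ Dz (PP z) z, ∏ p ∈ s, 1 / (p : ℝ)) = Hk 1 z := rfl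
  rw [h5] at h2
  nlinarith [mul_le_mul_of_nonneg_left h3 h4]

lemma sv_sd (s t : Finset ℕ) : ((s \ t) ∪ (t \ s)) \ (s \ t) = t \ s := by
  rw [Finset.union_sdiff_cancel_left]
  exact Finset.disjoint_left.2 fun p hp hp' =>
    (Finset.mem_sdiff.1 hp).2 (Finset.mem_sdiff.1 hp').1

lemma Hk_step (k : ℝ) (hk : 0 ≤ k) (y z : ℕ) (hy : 1 ≤ y) (hz : 1 ≤ z) :
    Hk k y * Hk 1 z ≤ Real.exp (2 * k) * Hk (k + 1) (y * z) := by
  have h1 : Hk k y * Hk 1 z ≤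
      ∑ x ∈ (PP (y * z)).powerset ×ˢ ((Dz (PP (y * z)) (y * z)).sigma (fun D => D.powerset)),
        (∏ p ∈ x.1, (k / (p : ℝ) ^ 2)) * ((∏ p ∈ x.2.2, (k / (p : ℝ))) * ∏ p ∈ x.2.1 \ x.2.2, (1 / (p : ℝ))) := by
    unfold Hk
    rw [Finset.sum_mul_sum, ← Finset.sum_product']
    refine sum_le_inj _ _ _ _ (fun x => (x.1 ∩ x.2, ⟨(x.1 \ x.2) ∪ (x.2 \ x.1), x.1 \ x.2⟩)) ?_ ?_ ?_ ?_
    · rintro ⟨s, t⟩ h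
      obtain ⟨hs, ht⟩ := Finset.mem_product.1 h
      obtain ⟨hs1, hs2⟩ := mem_Dz.1 hs
      obtain ⟨ht1, ht2⟩ := mem_Dz.1 ht
      have hs3 : s ⊆ PP (y * z) := fun p hp => by
        have := mem_PP.1 (hs1 hp)
        exact mem_PP.2 ⟨this.1.trans (Nat.le_mul_of_pos_right _ hz), this.2⟩
      have ht3 : t ⊆ PP (y * z) := fun p hp => by
        have := mem_PP.1 (ht1 hp)
        exact mem_PP.2 ⟨this.1.trans (Nat.le_mul_of_pos_left _ hy), this.2⟩
      refine Finset.mem_product.2 ⟨Finset.mem_powerset.2 (Finset.inter_subset_left.trans hs3),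
        Finset.mem_sigma.2 ⟨mem_Dz.2 ⟨?_, ?_⟩, Finset.mem_powerset.2 Finset.subset_union_left⟩⟩
      · exact Finset.union_subset (Finset.sdiff_subset.trans hs3) (Finset.sdiff_subset.trans ht3)
      · simp only
        rw [Finset.prod_union (Finset.disjoint_left.2 fun p hp hp' => by simp at hp hp'; tauto)]
        refine Nat.mul_le_mul (le_trans ?_ hs2) (le_trans ?_ ht2)
        · exact Finset.prod_le_prod_of_subset_of_one_le' Finset.sdiff_subset
            (fun p hp _ => (mem_PP.1 (hs1 hp)).2.pos)
        · exact Finset.prod_le_prod_of_subset_of_one_le' Finset.sdiff_subset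
            (fun p hp _ => (mem_PP.1 (ht1 hp)).2.pos)
    · rintro ⟨s, t⟩ _ ⟨s', t'⟩ _ h
      simp only [Prod.mk.injEq, Sigma.mk.injEq, heq_eq_eq] at h
      obtain ⟨h1, h2, h3⟩ := h
      have rs : ∀ s t : Finset ℕ, s = (s ∩ t) ∪ (s \ t) := fun s t => by
        rw [Finset.union_comm, Finset.sdiff_union_inter]
      have rt : ∀ s t : Finset ℕ, t = (s ∩ t) ∪ (((s \ t) ∪ (t \ s)) \ (s \ t)) := fun s t => by
        rw [sv_sd, Finset.inter_comm, Finset.union_comm, Finset.sdiff_union_inter]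
      refine Prod.ext ?_ ?_
      · exact (rs s t).trans (Eq.trans (by rw [h1, h3]) (rs s' t').symm)
      · exact (rt s t).trans (Eq.trans (by rw [h1, h2, h3]) (rt s' t').symm)
    · rintro ⟨s, t⟩ _
      simp only
      rw [sv_sd, ← Finset.prod_inter_mul_prod_sdiff s t, ← Finset.prod_inter_mul_prod_sdiff t s, Finset.inter_comm t s]
      have : ∏ p ∈ s ∩ t, k / (p : ℝ) ^ 2 = (∏ p ∈ s ∩ t, k / (p : ℝ)) * ∏ p ∈ s ∩ t, 1 / (p : ℝ) := by
        rw [← Finset.prod_mul_distrib]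
        refine Finset.prod_congr rfl fun p _ => ?_
        rw [div_mul_div_comm]; ring_nf
      rw [this]
      apply le_of_eq
      ring
    · intro x _
      refine mul_nonneg (Finset.prod_nonneg fun p _ => by positivity) (mul_nonneg (Finset.prod_nonneg fun p _ => by positivity) (Finset.prod_nonneg fun p _ => by positivity))
  refine h1.trans ?_
  rw [Finset.sum_product]
  simp only [← Finset.mul_sum, ← Finset.sum_mul]
  rw [Finset.sum_sigma]
  have h2 : ∑ D ∈ Dz (PP (y * z)) (y * z), ∑ d ∈ D.powerset,
      (∏ p ∈ d, (k / (p : ℝ))) * ∏ p ∈ D \ d, (1 / (p : ℝ)) = Hk (k + 1) (y * z) := by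
    unfold Hk
    refine Finset.sum_congr rfl fun D _ => ?_
    rw [← Finset.prod_add]
    refine Finset.prod_congr rfl fun p _ => ?_
    rw [add_div]
  rw [h2]
  have h4 : 0 ≤ Hk (k + 1) (y * z) := Finset.sum_nonneg fun s _ => Finset.prod_nonneg fun p _ => by positivity
  refine mul_le_mul_of_nonneg_right ?_ h4
  rw [← Finset.prod_one_add]
  refine (Finset.prod_le_prod (fun p _ => by positivity) (fun (p : ℕ) _ =>
    (add_comm (1:ℝ) _).trans_le (Real.add_one_le_exp (k / (p : ℝ) ^ 2)))).trans ?_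
  rw [← Real.exp_sum]
  apply Real.exp_le_exp.2
  have : ∑ p ∈ PP (y * z), k / (p : ℝ) ^ 2 = k * ∑ p ∈ PP (y * z), 1 / (p : ℝ) ^ 2 := by
    rw [Finset.mul_sum]; refine Finset.sum_congr rfl fun p _ => ?_; ring
  rw [this, mul_comm 2 k]
  refine mul_le_mul_of_nonneg_left (le_trans ?_ (sum_inv_sq (y * z))) hk
  refine Finset.sum_le_sum_of_subset_of_nonneg ?_ (fun _ _ _ => by positivity)
  intro p hp
  have := mem_PP.1 hp
  exact Finset.mem_Icc.2 ⟨this.2.pos, this.1⟩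

lemma H3_lower (y : ℕ) (hy : 1 ≤ y) : (Real.log y) ^ 3 ≤ 8 * Real.exp 6 * Hk 3 (y * y * y) := by
  have h1 := H1_lower y
  have h2 := Hk_step 1 (by norm_num) y y hy hy
  have h3 := Hk_step 2 (by norm_num) (y * y) y (Nat.mul_pos hy hy) hy
  norm_num at h2 h3
  have hl : 0 ≤ Real.log y := Real.log_natCast_nonneg y
  have hH : 0 ≤ Hk 1 y := by linarith
  calc (Real.log y) ^ 3 ≤ (2 * Hk 1 y) ^ 3 := by gcongr
    _ = 8 * ((Hk 1 y * Hk 1 y) * Hk 1 y) := by ring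
    _ ≤ 8 * ((Real.exp 2 * Hk 2 (y * y)) * Hk 1 y) := by gcongr
    _ = 8 * Real.exp 2 * (Hk 2 (y * y) * Hk 1 y) := by ring
    _ ≤ 8 * Real.exp 2 * (Real.exp 4 * Hk 3 (y * y * y)) := by gcongr
    _ = 8 * Real.exp 6 * Hk 3 (y * y * y) := by
      rw [show (6:ℝ) = 2 + 4 by norm_num, Real.exp_add]; ring

noncomputable def Sg (K : ℝ) (n : ℕ) : ℝ := ∏ p ∈ n.primeFactors, (1 + K / p)

lemma H3_le (E z : ℕ) (hE : E ≠ 0) :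
    Hk 3 z ≤ (∑ s ∈ Dz ((PP z).filter (fun p => p ≠ 2 ∧ ¬ p ∣ E)) z, ∏ p ∈ s, (3 / (p : ℝ))) *
      Sg 3 (2 * E) := by
  unfold Sg
  rw [Finset.prod_one_add, Finset.sum_mul_sum, ← Finset.sum_product']
  unfold Hk
  set P := (PP z).filter (fun p => p ≠ 2 ∧ ¬ p ∣ E) with hP
  refine sum_le_inj _ _ _ _ (fun s => (s ∩ P, s \ P)) ?_ ?_ ?_ ?_
  · intro s hs
    obtain ⟨h1, h2⟩ := mem_Dz.1 hs
    refine Finset.mem_product.2 ⟨mem_Dz.2 ⟨Finset.inter_subset_right, le_trans ?_ h2⟩, Finset.mem_powerset.2 ?_⟩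
    · exact Finset.prod_le_prod_of_subset_of_one_le' Finset.inter_subset_left
            (fun p hp _ => (mem_PP.1 (h1 hp)).2.pos)
    · intro p hp
      obtain ⟨hp1, hp2⟩ := Finset.mem_sdiff.1 hp
      have := (mem_PP.1 (h1 hp1)).2
      refine Nat.mem_primeFactors.2 ⟨this, ?_, by omega⟩
      by_contra hcon
      apply hp2
      refine Finset.mem_filter.2 ⟨h1 hp1, ?_, fun h => hcon (h.mul_left 2)⟩
      rintro rfl
      exact hcon (dvd_mul_right _ _)
  · intro s _ s' _ h
    simp only [Prod.mk.injEq] at h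
    rw [← Finset.sdiff_union_inter s P, ← Finset.sdiff_union_inter s' P, h.1, h.2]
  · intro s _
    rw [Finset.prod_inter_mul_prod_sdiff]
  · intro x _
    exact mul_nonneg (Finset.prod_nonneg fun p _ => by positivity) (Finset.prod_nonneg fun p _ => by positivity)


lemma Sg_ge_one (K : ℝ) (hK : 0 ≤ K) (n : ℕ) : 1 ≤ Sg K n := by
  unfold Sg
  refine Finset.prod_induction _ (fun x => 1 ≤ x) (fun a b ha hb => one_le_mul_of_one_le_of_one_le ha hb) le_rfl ?_
  intro p _
  have : 0 ≤ K / p := by positivity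
  linarith

lemma Sg_mul_le (K : ℝ) (hK : 0 ≤ K) (m n : ℕ) : Sg K (m * n) ≤ Sg K m * Sg K n := by
  rcases eq_or_ne m 0 with rfl | hm
  · rw [zero_mul]
    have := Sg_ge_one K hK 0
    have h2 := Sg_ge_one K hK n
    nlinarith
  rcases eq_or_ne n 0 with rfl | hn
  · rw [mul_zero]
    have := Sg_ge_one K hK 0
    have h2 := Sg_ge_one K hK m
    nlinarith
  unfold Sg
  rw [Nat.primeFactors_mul hm hn, ← Finset.prod_union_inter]
  refine le_mul_of_one_le_right (Finset.prod_nonneg fun p _ => by positivity) ?_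
  refine Finset.prod_induction _ (fun x => 1 ≤ x) (fun a b ha hb => one_le_mul_of_one_le_of_one_le ha hb) le_rfl ?_
  intro p _
  have : 0 ≤ K / p := by positivity
  linarith

lemma rho_lt {k : ℕ} (α : Fin 3 → ℕ) (V : Fin 3 → Finset (Fin k)) (hV : ∀ i, (V i).Nonempty)
    (p : ℕ) (hp : p.Prime) : rho α V p + 1 ≤ p ^ k := by
  have : Fact p.Prime := ⟨hp⟩
  unfold rho
  rw [Nat.card_eq_fintype_card]
  have h : Fintype.card {c : Fin k → ZMod p // Fe α V c = 0} < Fintype.card (Fin k → ZMod p) := by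
    refine Fintype.card_subtype_lt (x := fun _ => 0) ?_
    have : Fe α V (fun _ : Fin k => (0 : ZMod p)) = 1 := by
      unfold Fe
      refine Finset.prod_eq_one fun i _ => ?_
      rw [Finset.prod_eq_zero (hV i).choose_spec rfl]
      simp
    rw [this]
    exact one_ne_zero
  simpa using h

lemma dens_g (p : ℝ) (hp : 3 ≤ p) (d : ℝ) (hd : 3 / p - 4 / p ^ 2 ≤ d) (hd1 : d < 1) :
    3 / p ≤ d / (1 - d) := by
  have hp0 : 0 < p := by linarith
  rw [div_le_div_iff₀ hp0 (by linarith)]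
  have : (3 * p - 4) ≤ d * p ^ 2 := by
    have h : 3 / p - 4 / p ^ 2 = (3 * p - 4) / p ^ 2 := by field_simp
    rw [h, div_le_iff₀ (by positivity)] at hd
    exact hd
  -- need 3 ≤ d (p+3)
  have h2 : 3 * p ^ 2 ≤ (p + 3) * (3 * p - 4) := by nlinarith
  have h3 : (p + 3) * (3 * p - 4) ≤ (p + 3) * (d * p ^ 2) := by gcongr
  have h4 : p ^ 2 * 3 ≤ p ^ 2 * ((p + 3) * d) := by nlinarith
  have := le_of_mul_le_mul_left h4 (by positivity)
  linarith

set_option maxHeartbeats 1000000 in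
theorem sieve_box : ∃ C : ℝ, 0 < C ∧ ∀ (k : ℕ) (_ : k ≤ 3) (α : Fin 3 → ℕ) (V : Fin 3 → Finset (Fin k))
    (N : Fin k → ℕ) (E m : ℕ), (∀ i, 1 ≤ α i) → (∀ i, (V i).Nonempty) → E ≠ 0 →
    (∀ p : ℕ, p.Prime → 3 ≤ p → ¬ p ∣ E → 3 / (p : ℝ) - 4 / (p : ℝ) ^ 2 ≤ rho α V p / (p : ℝ) ^ k) →
    (∀ i, 2 ^ m ≤ N i) →
    (((Fintype.piFinset (fun i => Finset.Ico (N i) (2 * N i))).filter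
      (fun x => ∀ i, (α i * ∏ s ∈ V i, x s + 1).Prime)).card : ℝ) ≤
      C * (∏ i, (N i : ℝ)) * Sg 3 E / (m + 1 : ℝ) ^ 3 := by
  refine ⟨216 ^ 3 * (20 * Real.exp 6 * (1 / Real.log 2) ^ 3 + 8), by have := Real.log_pos one_lt_two; positivity, ?_⟩
  intro k hk α V N E m hα hV hE hdens hN
  set X := Fintype.piFinset (fun i => Finset.Ico (N i) (2 * N i)) with hX
  have hXc : (X.card : ℝ) = ∏ i, (N i : ℝ) := by
    rw [hX, Fintype.card_piFinset]
    push_cast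
    refine Finset.prod_congr rfl fun i _ => ?_
    rw [Nat.card_Ico]
    congr 1; omega
  have hlog : 0 < Real.log 2 := Real.log_pos one_lt_two
  have hS1 := Sg_ge_one 3 (by norm_num) E
  have hPN : 0 ≤ ∏ i, (N i : ℝ) := Finset.prod_nonneg fun i _ => by positivity
  set c0 : ℝ := 20 * Real.exp 6 * (1 / Real.log 2) ^ 3 + 8 with hc0
  have hc08 : 8 ≤ c0 := by
    have : 0 ≤ 20 * Real.exp 6 * (1 / Real.log 2) ^ 3 := by positivity
    linarith
  set l := m / 108 with hl
  have hmcomp : ∀ Q : ℝ, 0 ≤ Q → ∀ L : ℝ, 0 < L → (m + 1 : ℝ) ≤ 216 * L → Q / L ^ 3 ≤ 216 ^ 3 * Q / (m + 1 : ℝ) ^ 3 := by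
    intro Q hQ L hL h
    rw [div_le_div_iff₀ (by positivity) (by positivity)]
    have : (m + 1 : ℝ) ^ 3 ≤ (216 * L) ^ 3 := by gcongr
    nlinarith
  rcases Nat.eq_zero_or_pos l with hl0 | hl1
  · have h1 : ((X.filter (fun x => ∀ i, (α i * ∏ s ∈ V i, x s + 1).Prime)).card : ℝ) ≤ ∏ i, (N i : ℝ) := by
      rw [← hXc]; exact_mod_cast Finset.card_filter_le _ _
    refine h1.trans ?_
    have h2 := hmcomp (∏ i, (N i : ℝ)) hPN 1 one_pos (by
      have : m + 1 ≤ 216 := by omega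
      have : (m + 1 : ℝ) ≤ 216 := by exact_mod_cast this
      linarith)
    rw [one_pow, div_one] at h2
    refine h2.trans ?_
    refine div_le_div_of_nonneg_right ?_ (by positivity)
    have : 1 ≤ c0 * Sg 3 E := by nlinarith
    nlinarith [mul_le_mul_of_nonneg_left this hPN]
  · set y := 2 ^ l with hy
    set z := y * y * y with hz
    have hy1 : 1 ≤ y := Nat.one_le_two_pow
    have hz1 : 1 ≤ z := by rw [hz]; exact Nat.mul_pos (Nat.mul_pos hy1 hy1) hy1
    have hzM : z ^ 36 ≤ 2 ^ m := by
      rw [hz, hy, ← pow_add, ← pow_add, ← pow_mul]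
      exact Nat.pow_le_pow_right (by norm_num) (by omega)
    obtain ⟨M, hM⟩ : ∃ M : ℕ, M = 2 ^ m := ⟨_, rfl⟩
    rw [← hM] at hzM
    simp only [← hM] at hN
    clear_value z y
    set P := (PP z).filter (fun p => p ≠ 2 ∧ ¬ p ∣ E) with hP
    have hPp : ∀ p ∈ P, p.Prime ∧ 3 ≤ p ∧ ¬ p ∣ E ∧ p ≤ z := by
      intro p hp
      obtain ⟨h1, h2, h3⟩ := Finset.mem_filter.1 hp
      obtain ⟨h4, h5⟩ := mem_PP.1 h1
      have := h5.two_le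
      exact ⟨h5, by omega, h3, h4⟩
    set D := Dz P z with hD
    have hDP : ∀ s ∈ D, s ⊆ P := fun s hs => (mem_Dz.1 hs).1
    have hDz : ∀ s ∈ D, ∏ p ∈ s, p ≤ z := fun s hs => (mem_Dz.1 hs).2
    have hD0 : (∅ : Finset ℕ) ∈ D := mem_Dz.2 ⟨Finset.empty_subset _, by simpa using hz1⟩
    set δ : ℕ → ℝ := fun p => rho α V p / (p : ℝ) ^ k with hδ
    have hδ1' : ∀ p ∈ P, 1 / (p : ℝ) ^ k ≤ 1 - δ p := by
      intro p hp
      have h := rho_lt α V hV p (hPp p hp).1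
      have h' : (rho α V p : ℝ) + 1 ≤ (p : ℝ) ^ k := by exact_mod_cast h
      have hp0 : (0:ℝ) < p := by exact_mod_cast (hPp p hp).1.pos
      simp only [hδ]
      rw [le_sub_iff_add_le, ← add_div, div_le_one (by positivity)]
      linarith
    have hδ1 : ∀ p ∈ P, δ p < 1 := by
      intro p hp
      have := hδ1' p hp
      have hp0 : (0:ℝ) < p := by exact_mod_cast (hPp p hp).1.pos
      have : 0 < 1 / (p : ℝ) ^ k := by positivity
      linarith
    have hz1' : (1:ℝ) ≤ z := by exact_mod_cast hz1
    have hM0 : (0:ℝ) < M := by rw [hM]; push_cast; positivity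
    have hprodpos : ∀ s ⊆ P, 1 ≤ ∏ p ∈ s, p := fun s hs => Finset.prod_pos fun p hp => (hPp p (hs hp)).1.pos
    have hunion : ∀ s ∈ D, ∀ t ∈ D, ∏ p ∈ s ∪ t, p ≤ z ^ 2 := by
      intro s hs t ht
      obtain ⟨hs1, hs2⟩ := mem_Dz.1 hs
      obtain ⟨ht1, ht2⟩ := mem_Dz.1 ht
      rw [← Finset.union_sdiff_self_eq_union, Finset.prod_union Finset.disjoint_sdiff, sq]
      refine Nat.mul_le_mul hs2 (le_trans ?_ ht2)
      exact Finset.prod_le_prod_of_subset_of_one_le' Finset.sdiff_subset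
            (fun p hp _ => (hPp p (ht1 hp)).1.pos)
    have hzz : z ^ 2 ≤ M := (Nat.pow_le_pow_right hz1 (by norm_num)).trans hzM
    set G := ∑ s ∈ D, ∏ p ∈ s, (δ p / (1 - δ p)) with hG
    clear_value P D G
    have hR0 : 0 ≤ (∏ i, (N i : ℝ)) * (8 * ((z : ℝ) ^ 2 / M)) := by positivity
    have hδ0 : ∀ p ∈ P, 0 ≤ δ p := fun p _ => by simp only [hδ]; positivity
    have main := sv_abstract X (fun p x => p ∣ Fe α V x) P D δ ((∏ i, (N i : ℝ)) * (8 * (z ^ 2 / M))) (z ^ 14)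
      hR0 (fun s hs => hDP s hs) hδ0 hδ1
      (by
        intro s hs t ht r hr
        have hrP : r ⊆ P := hr.trans (Finset.union_subset (hDP _ hs) (hDP _ ht))
        have e : X.filter (fun x => ∀ p ∈ r, p ∣ Fe α V x) = X.filter (fun x => (∏ p ∈ r, p) ∣ Fe α V x) := by
          refine Finset.filter_congr fun x _ => ⟨fun h => ?_, fun h p hp => (Finset.dvd_prod_of_mem _ hp).trans h⟩
          exact Finset.prod_primes_dvd _ (fun p hp => (hPp p (hrP hp)).1.prime) h
        have hrz : ∏ p ∈ r, p ≤ z ^ 2 := by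
          refine le_trans ?_ (hunion s hs t ht)
          exact Finset.prod_le_prod_of_subset_of_one_le' hr
            (fun p hp _ => (hPp p ((Finset.union_subset (hDP _ hs) (hDP _ ht)) hp)).1.pos)
        have hb := box_equi α V N M (∏ p ∈ r, p) (hprodpos r hrP) (hrz.trans hzz) hN
        have e2 : (rho α V (∏ p ∈ r, p) : ℝ) / ((∏ p ∈ r, p : ℕ) : ℝ) ^ Fintype.card (Fin k) = ∏ p ∈ r, δ p := by
          rw [rho_prod α V r (fun p hp => (hPp p (hrP hp)).1)]
          push_cast
          rw [← Finset.prod_pow, ← Finset.prod_div_distrib]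
          simp [hδ]
        rw [e2] at hb
        rw [e, hXc]
        refine hb.trans ?_
        gcongr
        · rw [Fintype.card_fin]
          calc (2:ℝ) ^ k ≤ 2 ^ 3 := pow_le_pow_right₀ (by norm_num) hk
            _ = 8 := by norm_num
        · exact_mod_cast hrz)
      (by
        intro s hs t ht
        have hsub := Finset.union_subset (hDP _ hs) (hDP _ ht)
        have h1 : ∏ p ∈ s ∪ t, (2 / (1 - δ p) ^ 2) ≤ ∏ p ∈ s ∪ t, (p : ℝ) ^ 7 := by
          refine Finset.prod_le_prod (fun p _ => by positivity) fun p hp => ?_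
          have hp3 : (3:ℝ) ≤ p := by exact_mod_cast (hPp p (hsub hp)).2.1
          have hlow := hδ1' p (hsub hp)
          have hlow2 : 1 / (p : ℝ) ^ 3 ≤ 1 - δ p := by
            refine le_trans ?_ hlow
            gcongr
            linarith
          have h0 : (0:ℝ) < 1 / (p : ℝ) ^ 3 := by positivity
          calc 2 / (1 - δ p) ^ 2 ≤ 2 / (1 / (p : ℝ) ^ 3) ^ 2 := by gcongr
            _ = 2 * (p : ℝ) ^ 6 := by field_simp
            _ ≤ p * (p : ℝ) ^ 6 := by gcongr; linarith
            _ = (p : ℝ) ^ 7 := by ring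
        refine h1.trans ?_
        rw [Finset.prod_pow]
        have h2 : ((∏ p ∈ s ∪ t, (p : ℝ))) ≤ (z : ℝ) ^ 2 := by
          have := hunion s hs t ht
          rw [← Nat.cast_prod]; exact_mod_cast this
        calc (∏ p ∈ s ∪ t, (p : ℝ)) ^ 7 ≤ ((z : ℝ) ^ 2) ^ 7 := by gcongr
          _ = (z : ℝ) ^ 14 := by ring)
      G hG
    have hDc : (D.card : ℝ) ≤ z := by
      have : D.card ≤ (Finset.Icc 1 z).card := by
        refine Finset.card_le_card_of_injOn (fun s => ∏ p ∈ s, p) ?_ ?_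
        · intro s hs
          have := And.intro (hDP s hs) (hDz s hs)
          exact Finset.mem_coe.2 (Finset.mem_Icc.2 ⟨hprodpos s this.1, this.2⟩)
        · intro s hs t ht h
          have hs := hDP s hs
          have ht := hDP t ht
          have e1 := Nat.primeFactors_prod (s := s) (fun p hp => (hPp p (hs hp)).1)
          have e2 := Nat.primeFactors_prod (s := t) (fun p hp => (hPp p (ht hp)).1)
          rw [← e1, ← e2]
          simp only at h
          rw [h]
      rw [Nat.card_Icc] at this
      exact_mod_cast (by omega : D.card ≤ z)
    have hGlow : ∑ s ∈ D, ∏ p ∈ s, (3 / (p : ℝ)) ≤ G := by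
      rw [hG]
      refine Finset.sum_le_sum fun s hs => Finset.prod_le_prod (fun p _ => by positivity) fun p hp => ?_
      have hpP := (hDP _ hs) hp
      obtain ⟨h1, h2, h3, h4⟩ := hPp p hpP
      exact dens_g p (by exact_mod_cast h2) _ (hdens p h1 h2 h3) (hδ1 p hpP)
    have hG1 : 1 ≤ G := by
      refine le_trans ?_ hGlow
      have h0 := hD0
      have := Finset.single_le_sum (f := fun s : Finset ℕ => ∏ p ∈ s, (3 / (p : ℝ)))
        (fun s _ => Finset.prod_nonneg fun p _ => by positivity) h0
      simpa using this
    have hH := H3_le E z hE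
    rw [← hP, ← hD] at hH
    have hH3 := H3_lower y hy1
    rw [← hz] at hH3
    have hS2 : Sg 3 (2 * E) ≤ 5 / 2 * Sg 3 E := by
      refine (Sg_mul_le 3 (by norm_num) 2 E).trans ?_
      have : Sg 3 2 = 5 / 2 := by
        unfold Sg
        rw [Nat.Prime.primeFactors Nat.prime_two]
        norm_num
      rw [this]
    have hl0 : (0:ℝ) < l := by exact_mod_cast hl1
    have hlogy : Real.log y = l * Real.log 2 := by rw [hy]; push_cast; rw [Real.log_pow]
    have hGfin : (l : ℝ) ^ 3 ≤ 20 * Real.exp 6 * (1 / Real.log 2) ^ 3 * Sg 3 E * G := by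
      have h1 : (l * Real.log 2) ^ 3 ≤ 8 * Real.exp 6 * (G * (5 / 2 * Sg 3 E)) := by
        rw [← hlogy]
        refine hH3.trans ?_
        gcongr
        refine hH.trans ?_
        gcongr
        exact le_trans zero_le_one (Sg_ge_one 3 (by norm_num) _)
      rw [mul_pow] at h1
      have h2 : (l : ℝ) ^ 3 ≤ (8 * Real.exp 6 * (G * (5 / 2 * Sg 3 E))) / Real.log 2 ^ 3 := by
        rw [le_div_iff₀ (by positivity)]; exact h1
      refine h2.trans (le_of_eq ?_)
      field_simp
      ring
    set cnt : ℝ := ((X.filter (fun x => ∀ p ∈ P, ¬ p ∣ Fe α V x)).card : ℝ) with hcnt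
    have hle : ((X.filter (fun x => ∀ i, (α i * ∏ s ∈ V i, x s + 1).Prime)).card : ℝ) ≤ cnt := by
      rw [hcnt]
      norm_cast
      refine Finset.card_le_card fun x hx => ?_
      obtain ⟨hx1, hx2⟩ := Finset.mem_filter.1 hx
      refine Finset.mem_filter.2 ⟨hx1, fun p hp hdvd => ?_⟩
      obtain ⟨hpp, -, -, hpz⟩ := hPp p hp
      obtain ⟨i, -, hi⟩ := (hpp.prime.dvd_finsetProd_iff _).1 hdvd
      have heq := (Nat.prime_dvd_prime_iff_eq hpp (hx2 i)).1 (by simpa using hi)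
      have hbig : M ≤ ∏ s ∈ V i, x s := by
        obtain ⟨s, hs⟩ := hV i
        have hxs : ∀ s, M ≤ x s := fun s => (hN s).trans (Finset.mem_Ico.1 (Fintype.mem_piFinset.1 hx1 s)).1
        have hM1 : 1 ≤ M := by rw [hM]; exact Nat.one_le_two_pow
        refine (hxs s).trans (Nat.le_of_dvd ?_ (Finset.dvd_prod_of_mem _ hs))
        exact Finset.prod_pos fun s _ => lt_of_lt_of_le hM1 (hxs s)
      have hzM1 : z ≤ M := by
        refine le_trans ?_ hzz
        nlinarith
      have := Nat.le_mul_of_pos_left (∏ s ∈ V i, x s) (hα i)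
      omega
    refine hle.trans ?_
    rw [hXc] at main
    -- error term
    have hMz : (z : ℝ) ^ 36 ≤ M := by exact_mod_cast hzM
    have hlz : (l : ℝ) ^ 3 ≤ z := by
      have : l ^ 3 ≤ z := by
        have : l ≤ y := by rw [hy]; exact Nat.lt_two_pow_self.le
        calc l ^ 3 ≤ y ^ 3 := Nat.pow_le_pow_left this 3
          _ = z := by rw [hz]; ring
      exact_mod_cast this
    have herr : (D.card : ℝ) ^ 2 * (((∏ i, (N i : ℝ)) * (8 * (z ^ 2 / M))) * z ^ 14) ≤
        (∏ i, (N i : ℝ)) * (8 / (l : ℝ) ^ 3) := by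
      calc _ ≤ (z : ℝ) ^ 2 * (((∏ i, (N i : ℝ)) * (8 * (z ^ 2 / (z : ℝ) ^ 36))) * z ^ 14) := by gcongr
        _ = (∏ i, (N i : ℝ)) * (8 / (z : ℝ) ^ 18) := by field_simp
        _ ≤ (∏ i, (N i : ℝ)) * (8 / (z : ℝ)) := by
          gcongr
          exact le_self_pow₀ hz1' (by norm_num)
        _ ≤ _ := by gcongr
    have h5 : cnt ≤ (∏ i, (N i : ℝ)) * c0 * Sg 3 E / (l : ℝ) ^ 3 := by
      rw [le_div_iff₀ (by positivity)]
      have hG0 : 0 < G := by linarith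
      have hcnt0 : 0 ≤ cnt := by positivity
      have h6 : G ^ 2 * cnt ≤ (∏ i, (N i : ℝ)) * G + (∏ i, (N i : ℝ)) * (8 / (l : ℝ) ^ 3) * G ^ 2 := by
        refine main.trans ?_
        have : (∏ i, (N i : ℝ)) * (8 / (l : ℝ) ^ 3) ≤ (∏ i, (N i : ℝ)) * (8 / (l : ℝ) ^ 3) * G ^ 2 :=
          le_mul_of_one_le_right (by positivity) (one_le_pow₀ hG1)
        linarith
      have h7 : cnt ≤ (∏ i, (N i : ℝ)) * (1 / G + 8 / (l : ℝ) ^ 3) := by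
        have : G ^ 2 * cnt ≤ G ^ 2 * ((∏ i, (N i : ℝ)) * (1 / G + 8 / (l : ℝ) ^ 3)) := by
          refine h6.trans (le_of_eq ?_)
          field_simp
        exact le_of_mul_le_mul_left this (by positivity)
      calc cnt * (l : ℝ) ^ 3 ≤ ((∏ i, (N i : ℝ)) * (1 / G + 8 / (l : ℝ) ^ 3)) * (l : ℝ) ^ 3 := by gcongr
        _ = (∏ i, (N i : ℝ)) * ((l : ℝ) ^ 3 / G + 8) := by field_simp
        _ ≤ (∏ i, (N i : ℝ)) * (20 * Real.exp 6 * (1 / Real.log 2) ^ 3 * Sg 3 E + 8 * Sg 3 E) := by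
          gcongr
          · rw [div_le_iff₀ hG0]; exact hGfin
          · linarith
        _ = (∏ i, (N i : ℝ)) * c0 * Sg 3 E := by rw [hc0]; ring
    refine h5.trans ?_
    have h8 := hmcomp ((∏ i, (N i : ℝ)) * c0 * Sg 3 E) (by positivity) l hl0 (by
      have : m + 1 ≤ 216 * l := by omega
      exact_mod_cast this)
    refine h8.trans (le_of_eq ?_)
    ring


lemma sum_inv_sqrt (M : ℕ) : ∑ d ∈ Finset.Icc 1 M, 1 / √(d : ℝ) ≤ 2 * √(M : ℝ) := by
  induction M with
  | zero => simp
  | succ n ih =>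
    rw [Finset.sum_Icc_succ_top (by omega)]
    have hb : 0 < √((n + 1 : ℕ) : ℝ) := Real.sqrt_pos.2 (by positivity)
    have ha : 0 ≤ √(n : ℝ) := Real.sqrt_nonneg _
    have h1 : √(n : ℝ) ^ 2 = n := Real.sq_sqrt (by positivity)
    have h2 : √((n + 1 : ℕ) : ℝ) ^ 2 = n + 1 := by rw [Real.sq_sqrt (by positivity)]; push_cast; ring
    set a := √(n : ℝ)
    set b := √((n + 1 : ℕ) : ℝ)
    have : 1 / b ≤ 2 * b - 2 * a := by
      rw [div_le_iff₀ hb]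
      nlinarith [sq_nonneg (b - a)]
    linarith

lemma sum_inv_three_half (M : ℕ) : ∑ d ∈ Finset.Icc 1 M, 1 / (√(d : ℝ) * d) ≤ 3 := by
  have key : ∀ M : ℕ, ∑ d ∈ Finset.Icc 1 (M + 1), 1 / (√(d : ℝ) * d) ≤ 3 - 2 / √((M + 1 : ℕ) : ℝ) := by
    intro M
    induction M with
    | zero => norm_num
    | succ n ih =>
      rw [Finset.sum_Icc_succ_top (by omega)]
      have hb : 0 < √((n + 1 + 1 : ℕ) : ℝ) := Real.sqrt_pos.2 (by positivity)
      have ha : 0 < √((n + 1 : ℕ) : ℝ) := Real.sqrt_pos.2 (by positivity)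
      have h1 : √((n + 1 : ℕ) : ℝ) ^ 2 = n + 1 := by rw [Real.sq_sqrt (by positivity)]; push_cast; ring
      have h2 : √((n + 1 + 1 : ℕ) : ℝ) ^ 2 = ((n + 1 + 1 : ℕ) : ℝ) := by rw [Real.sq_sqrt (by positivity)]
      have h3 : ((n + 1 + 1 : ℕ) : ℝ) = n + 1 + 1 := by push_cast; ring
      rw [← h2]
      have hab : √((n + 1 : ℕ) : ℝ) ≤ √((n + 1 + 1 : ℕ) : ℝ) := Real.sqrt_le_sqrt (by push_cast; linarith)
      set a := √((n + 1 : ℕ) : ℝ)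
      set b := √((n + 1 + 1 : ℕ) : ℝ)
      have e2 : √(b ^ 2) = b := Real.sqrt_sq hb.le
      rw [e2]
      have hsub : b ^ 2 - a ^ 2 = 1 := by rw [h1, h2, h3]; ring
      have : 1 / (b * b ^ 2) ≤ 2 / a - 2 / b := by
        rw [div_sub_div _ _ ha.ne' hb.ne', div_le_div_iff₀ (by positivity) (by positivity)]
        have h5 : (2 * b - 2 * a) * (b + a) = 2 := by linear_combination 2 * hsub
        have h6 : 0 ≤ b - a := by linarith
        have h7 : 1 ≤ (2 * b - 2 * a) * b := by nlinarith
        have h8 : a * b ≤ b ^ 2 := by nlinarith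
        calc 1 * (a * b) ≤ ((2 * b - 2 * a) * b) * b ^ 2 := by
              refine mul_le_mul h7 h8 (by positivity) (by linarith)
          _ = _ := by ring
      linarith
  rcases M with _ | M
  · simp
  · refine (key M).trans ?_
    have : 0 ≤ 2 / √((M + 1 : ℕ) : ℝ) := by positivity
    linarith

lemma Sg_le_div (K : ℕ) : ∃ C : ℝ, 0 < C ∧ ∀ n : ℕ, n ≠ 0 → Sg K n ≤ C * ∑ d ∈ n.divisors, 1 / √(d : ℝ) := by
  refine ⟨(1 + K : ℝ) ^ (K ^ 2), by positivity, fun n hn => ?_⟩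
  have h1 : Sg K n ≤ ∏ p ∈ n.primeFactors, ((if p < K ^ 2 then (1 + K : ℝ) else 1) * (1 + 1 / √(p : ℝ))) := by
    unfold Sg
    refine Finset.prod_le_prod (fun p _ => by positivity) fun p hp => ?_
    have hp1 : (1:ℝ) ≤ p := by exact_mod_cast (Nat.prime_of_mem_primeFactors hp).one_le
    have hp0 : (0:ℝ) < p := by linarith
    split_ifs with h
    · have : (K : ℝ) / p ≤ K := div_le_self (by positivity) hp1
      have h2 : 0 ≤ 1 / √(p : ℝ) := by positivity
      have h3 : (0:ℝ) ≤ K := by positivity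
      nlinarith [mul_nonneg h2 h3]
    · rw [one_mul]
      have : (K : ℝ) ≤ √(p : ℝ) := by
        rw [Real.le_sqrt (by positivity) (by positivity)]
        exact_mod_cast not_lt.1 h
      have h3 : √(p : ℝ) * √(p : ℝ) = p := Real.mul_self_sqrt hp0.le
      have h4 : 0 < √(p : ℝ) := Real.sqrt_pos.2 hp0
      have : (K : ℝ) / p ≤ 1 / √(p : ℝ) := by
        rw [div_le_div_iff₀ hp0 h4]
        nlinarith
      linarith
  refine h1.trans ?_
  rw [Finset.prod_mul_distrib]
  refine mul_le_mul ?_ ?_ (Finset.prod_nonneg fun p _ => by positivity) (by positivity)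
  · rw [← Finset.prod_filter, Finset.prod_const]
    refine pow_le_pow_right₀ (by simp) ?_
    have : n.primeFactors.filter (fun p => p < K ^ 2) ⊆ Finset.range (K ^ 2) := by
      intro p hp
      exact Finset.mem_range.2 (Finset.mem_filter.1 hp).2
    simpa using Finset.card_le_card this
  · rw [Finset.prod_one_add]
    refine sum_le_inj _ _ _ _ (fun s => ∏ p ∈ s, p) ?_ ?_ ?_ ?_
    · intro s hs
      rw [Nat.mem_divisors]
      refine ⟨?_, hn⟩
      refine Finset.prod_primes_dvd _ (fun p hp => (Nat.prime_of_mem_primeFactors (Finset.mem_powerset.1 hs hp)).prime) ?_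
      exact fun p hp => Nat.dvd_of_mem_primeFactors (Finset.mem_powerset.1 hs hp)
    · intro s hs t ht h
      have hs := Finset.mem_powerset.1 hs
      have ht := Finset.mem_powerset.1 ht
      have e1 := Nat.primeFactors_prod (s := s) (fun p hp => Nat.prime_of_mem_primeFactors (hs hp))
      have e2 := Nat.primeFactors_prod (s := t) (fun p hp => Nat.prime_of_mem_primeFactors (ht hp))
      rw [← e1, ← e2]
      simp only at h
      rw [h]
    · intro s _
      have : ∀ s : Finset ℕ, √((∏ p ∈ s, p : ℕ) : ℝ) = ∏ p ∈ s, √(p : ℝ) := by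
        intro s
        induction s using Finset.induction_on with
        | empty => simp
        | insert a s ha ih =>
          rw [Finset.prod_insert ha, Finset.prod_insert ha, Nat.cast_mul, Real.sqrt_mul (by positivity), ih]
      rw [this, Finset.prod_div_distrib, Finset.prod_const_one]
    · intro b _; positivity

lemma avg_gen (K : ℕ) : ∃ C : ℝ, 0 < C ∧ ∀ (N : ℕ) (W : Finset ℕ) (f : ℕ → ℕ), (∀ n ∈ W, f n ≠ 0) →
    (∀ n ∈ W, f n ≤ 4 * N ^ 2) → (∀ d : ℕ, 1 ≤ d → ((W.filter (fun n => d ∣ f n)).card : ℝ) ≤ N / d + 1) →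
    ∑ n ∈ W, Sg K (f n) ≤ C * N := by
  obtain ⟨C, hC, h⟩ := Sg_le_div K
  refine ⟨C * 7, by positivity, fun N W f hf0 hf hd => ?_⟩
  have h1 : ∑ n ∈ W, Sg K (f n) ≤ ∑ n ∈ W, C * ∑ d ∈ Finset.Icc 1 (4 * N ^ 2), if d ∣ f n then 1 / √(d : ℝ) else 0 := by
    refine Finset.sum_le_sum fun n hn => (h _ (hf0 n hn)).trans ?_
    gcongr
    rw [← Finset.sum_filter]
    refine Finset.sum_le_sum_of_subset_of_nonneg ?_ (fun _ _ _ => by positivity)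
    intro d hd
    have := Nat.dvd_of_mem_divisors hd
    refine Finset.mem_filter.2 ⟨Finset.mem_Icc.2 ⟨Nat.pos_of_mem_divisors hd, ?_⟩, this⟩
    exact (Nat.le_of_dvd (Nat.pos_of_ne_zero (hf0 n hn)) this).trans (hf n hn)
  refine h1.trans ?_
  rw [← Finset.mul_sum, Finset.sum_comm, mul_assoc]
  gcongr
  have h2 : ∀ d ∈ Finset.Icc 1 (4 * N ^ 2), (∑ n ∈ W, if d ∣ f n then 1 / √(d : ℝ) else 0) ≤
      N * (1 / (√(d : ℝ) * d)) + 1 / √(d : ℝ) := by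
    intro d hd'
    have hd1 := (Finset.mem_Icc.1 hd').1
    rw [← Finset.sum_filter, Finset.sum_const, nsmul_eq_mul]
    have hd0 : (0:ℝ) < d := by exact_mod_cast hd1
    have h4 : 0 < √(d : ℝ) := Real.sqrt_pos.2 hd0
    calc _ ≤ ((N : ℝ) / d + 1) * (1 / √(d : ℝ)) := by gcongr; exact hd d hd1
      _ = _ := by field_simp
  refine (Finset.sum_le_sum h2).trans ?_
  rw [Finset.sum_add_distrib, ← Finset.mul_sum]
  have h3 := sum_inv_three_half (4 * N ^ 2)
  have h4 := sum_inv_sqrt (4 * N ^ 2)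
  have h5 : √((4 * N ^ 2 : ℕ) : ℝ) = 2 * N := by
    rw [show ((4 * N ^ 2 : ℕ) : ℝ) = (2 * N) ^ 2 by push_cast; ring, Real.sqrt_sq (by positivity)]
  rw [h5] at h4
  have hN : (0:ℝ) ≤ N := by positivity
  nlinarith

lemma avg_id (K : ℕ) : ∃ C : ℝ, 0 < C ∧ ∀ (N : ℕ), ∑ n ∈ Finset.Ico N (2 * N), Sg K n ≤ C * N := by
  obtain ⟨C, hC, h⟩ := avg_gen K
  refine ⟨C, hC, fun N => h N _ (fun n => n) ?_ ?_ ?_⟩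
  · intro n hn
    have := Finset.mem_Ico.1 hn
    omega
  · intro n hn
    have := Finset.mem_Ico.1 hn
    nlinarith
  · intro d hd
    have h1 := cnt_Ico N d hd 0
    have e : (Finset.Ico N (2 * N)).filter (fun n => d ∣ n) =
      (Finset.Ico N (2 * N)).filter (fun n : ℕ => (n : ZMod d) = 0) :=
      Finset.filter_congr fun n _ => (ZMod.natCast_eq_zero_iff n d).symm
    rw [e]
    have := (abs_le.1 h1).2
    linarith

lemma avg_diff (K : ℕ) : ∃ C : ℝ, 0 < C ∧ ∀ (N a k : ℕ), a ≤ 2 * N → k ≤ 4 * N ^ 2 →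
    ∑ n ∈ (Finset.Ico N (2 * N)).filter (fun n => Nat.Coprime (n * a) k ∧ n * a ≠ k),
      Sg K (((n * a : ℕ) : ℤ) - (k : ℕ)).natAbs ≤ C * N := by
  obtain ⟨C, hC, h⟩ := avg_gen K
  refine ⟨C, hC, fun N a k ha hk => h N _ (fun n => (((n * a : ℕ) : ℤ) - (k : ℕ)).natAbs) ?_ ?_ ?_⟩
  · intro n hn
    have := (Finset.mem_filter.1 hn).2.2
    omega
  · intro n hn
    have h1 := Finset.mem_Ico.1 (Finset.mem_filter.1 hn).1
    have h2 : n * a ≤ 4 * N ^ 2 := by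
      calc n * a ≤ (2 * N) * (2 * N) := Nat.mul_le_mul (by omega) ha
        _ = _ := by ring
    generalize n * a = na at *
    generalize 4 * N ^ 2 = M at *
    omega
  · intro d hd
    by_cases hda : Nat.Coprime a d
    · have : NeZero d := ⟨by omega⟩
      have h1 := cnt_Ico N d hd ((k : ZMod d) * (a : ZMod d)⁻¹)
      have : (((Finset.Ico N (2 * N)).filter (fun n => Nat.Coprime (n * a) k ∧ n * a ≠ k)).filter
          (fun n => d ∣ (((n * a : ℕ) : ℤ) - (k : ℕ)).natAbs)).card ≤
        ((Finset.Ico N (2 * N)).filter (fun n : ℕ => (n : ZMod d) = (k : ZMod d) * (a : ZMod d)⁻¹)).card := by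
        refine Finset.card_le_card fun n hn => ?_
        obtain ⟨hn1, hn2⟩ := Finset.mem_filter.1 hn
        refine Finset.mem_filter.2 ⟨(Finset.mem_filter.1 hn1).1, ?_⟩
        rw [← Int.natCast_dvd, ← ZMod.intCast_zmod_eq_zero_iff_dvd] at hn2
        push_cast at hn2
        have hk : (k : ZMod d) = n * a := (sub_eq_zero.1 hn2).symm
        rw [hk, mul_assoc, ZMod.coe_mul_inv_eq_one a hda, mul_one]
      have h3 : ((((Finset.Ico N (2 * N)).filter (fun n => Nat.Coprime (n * a) k ∧ n * a ≠ k)).filter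
          (fun n => d ∣ (((n * a : ℕ) : ℤ) - (k : ℕ)).natAbs)).card : ℝ) ≤
        ((Finset.Ico N (2 * N)).filter (fun n : ℕ => (n : ZMod d) = (k : ZMod d) * (a : ZMod d)⁻¹)).card := by
        exact_mod_cast this
      have := (abs_le.1 h1).2
      linarith
    · have : ((Finset.Ico N (2 * N)).filter (fun n => Nat.Coprime (n * a) k ∧ n * a ≠ k)).filter
          (fun n => d ∣ (((n * a : ℕ) : ℤ) - (k : ℕ)).natAbs) = ∅ := by
        refine Finset.filter_eq_empty_iff.2 fun n hn hdv => hda ?_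
        have hcop := (Finset.mem_filter.1 hn).2.1
        rw [Nat.coprime_iff_gcd_eq_one] at hcop ⊢
        have hg1 : (Nat.gcd a d) ∣ n * a := (Nat.gcd_dvd_left a d).mul_left n
        have hg2 : (Nat.gcd a d) ∣ k := by
          have h3 := Int.natCast_dvd.2 ((Nat.gcd_dvd_right a d).trans hdv)
          have h4 : ((Nat.gcd a d : ℕ) : ℤ) ∣ ((n * a : ℕ) : ℤ) := Int.natCast_dvd_natCast.2 hg1
          have h5 := dvd_sub h4 h3
          rw [sub_sub_cancel] at h5
          exact Int.natCast_dvd_natCast.1 h5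
        exact Nat.dvd_one.1 (hcop ▸ Nat.dvd_gcd hg1 hg2)
      rw [this]
      simp
      positivity


lemma bonf {T : Type*} [Fintype T] (A B C : T → Prop) [DecidablePred A] [DecidablePred B] [DecidablePred C] :
    (Finset.univ.filter A).card + (Finset.univ.filter B).card + (Finset.univ.filter C).card ≤
    (Finset.univ.filter (fun t => A t ∨ B t ∨ C t)).card + (Finset.univ.filter (fun t => A t ∧ B t)).card +
    (Finset.univ.filter (fun t => A t ∧ C t)).card + (Finset.univ.filter (fun t => B t ∧ C t)).card := by
  simp only [Finset.card_filter]
  simp only [← Finset.sum_add_distrib]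
  refine Finset.sum_le_sum fun t _ => ?_
  by_cases hA : A t <;> by_cases hB : B t <;> by_cases hC : C t <;> simp [hA, hB, hC]

def Zf {k : ℕ} (α : Fin 3 → ℕ) (V : Fin 3 → Finset (Fin k)) (p : ℕ) (i : Fin 3) (c : Fin k → ZMod p) : Prop :=
  (α i : ZMod p) * ∏ s ∈ V i, c s + 1 = 0

lemma rho_bonf {k : ℕ} (α : Fin 3 → ℕ) (V : Fin 3 → Finset (Fin k)) (p : ℕ) [Fact p.Prime] (i0 i1 i2 : Fin 3) (A B C : (Fin k → ZMod p) → Prop)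
    [DecidablePred A] [DecidablePred B] [DecidablePred C]
    (hA : ∀ c, Zf α V p i0 c ↔ A c) (hB : ∀ c, Zf α V p i1 c ↔ B c) (hC : ∀ c, Zf α V p i2 c ↔ C c) :
    (Finset.univ.filter A).card + (Finset.univ.filter B).card + (Finset.univ.filter C).card ≤
    rho α V p + (Finset.univ.filter (fun t => A t ∧ B t)).card +
    (Finset.univ.filter (fun t => A t ∧ C t)).card + (Finset.univ.filter (fun t => B t ∧ C t)).card := by
  refine (bonf A B C).trans ?_
  have : (Finset.univ.filter (fun t => A t ∨ B t ∨ C t)).card ≤ rho α V p := by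
    unfold rho
    rw [Nat.card_eq_fintype_card, Fintype.card_subtype]
    refine Finset.card_le_card fun c hc => ?_
    refine Finset.mem_filter.2 ⟨Finset.mem_univ _, ?_⟩
    have hz : ∀ i, Zf α V p i c → Fe α V c = 0 := by
      intro i hi
      exact Finset.prod_eq_zero (Finset.mem_univ i) hi
    rcases (Finset.mem_filter.1 hc).2 with h | h | h
    · exact hz i0 ((hA c).2 h)
    · exact hz i1 ((hB c).2 h)
    · exact hz i2 ((hC c).2 h)
  omega

lemma lin_iff {F : Type*} [Field F] {a x : F} (ha : a ≠ 0) : a * x + 1 = 0 ↔ x = -a⁻¹ := by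
  constructor
  · intro h
    field_simp
    linear_combination h
  · rintro rfl
    field_simp
    ring

lemma card_one {k : ℕ} {F : Type*} [Fintype F] [DecidableEq F] (j : Fin k) (s : F) :
    (Finset.univ.filter (fun c : Fin k → F => c j = s)).card = Fintype.card F ^ (k - 1) := by
  have : Finset.univ.filter (fun c : Fin k → F => c j = s) =
      Fintype.piFinset (fun i => if i = j then {s} else Finset.univ) := by
    ext c
    simp only [Finset.mem_filter, Finset.mem_univ, true_and, Fintype.mem_piFinset]
    constructor
    · intro h i
      split_ifs with hi
      · subst hi; simpa using h
      · simp
    · intro h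
      simpa using h j
  rw [this, Fintype.card_piFinset]
  have : ∀ i, (if i = j then ({s} : Finset F) else Finset.univ).card = if i = j then 1 else Fintype.card F := by
    intro i; split_ifs <;> simp
  simp only [this]
  rw [Finset.prod_ite, Finset.prod_const_one, one_mul, Finset.prod_const]
  congr 1
  rw [Finset.filter_ne' , Finset.card_erase_of_mem (Finset.mem_univ _)]
  simp

lemma card_two {F : Type*} [Fintype F] [DecidableEq F] (s t : F) :
    (Finset.univ.filter (fun c : Fin 2 → F => c 0 = s ∧ c 1 = t)).card ≤ 1 := by
  rw [Finset.card_le_one]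
  intro a ha b hb
  have ha := (Finset.mem_filter.1 ha).2
  have hb := (Finset.mem_filter.1 hb).2
  ext i
  fin_cases i
  · exact ha.1.trans hb.1.symm
  · exact ha.2.trans hb.2.symm

lemma card_three {F : Type*} [Fintype F] [DecidableEq F] (j l m : Fin 3) (h : ∀ i, i = j ∨ i = l ∨ i = m) (s t : F) :
    (Finset.univ.filter (fun c : Fin 3 → F => c j = s ∧ c l = t)).card ≤ Fintype.card F := by
  rw [← Finset.card_univ]
  refine Finset.card_le_card_of_injOn (fun c => c m) (by simp) ?_
  intro a ha b hb hab
  have ha := (Finset.mem_filter.1 ha).2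
  have hb := (Finset.mem_filter.1 hb).2
  ext i
  rcases h i with rfl | rfl | rfl
  · exact ha.1.trans hb.1.symm
  · exact ha.2.trans hb.2.symm
  · exact hab

lemma dens_T1 (α : Fin 3 → ℕ) (p : ℕ) (hp : p.Prime) (h0 : ∀ i, (α i : ZMod p) ≠ 0)
    (h01 : (α 0 : ZMod p) ≠ α 1) (h02 : (α 0 : ZMod p) ≠ α 2) (h12 : (α 1 : ZMod p) ≠ α 2)
    (V : Fin 3 → Finset (Fin 1)) (hV : ∀ i, V i = {0}) :
    3 / (p : ℝ) - 4 / (p : ℝ) ^ 2 ≤ rho α V p / (p : ℝ) ^ 1 := by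
  have : Fact p.Prime := ⟨hp⟩
  have hZ : ∀ i c, Zf α V p i c ↔ c 0 = -(α i : ZMod p)⁻¹ := by
    intro i c
    unfold Zf
    rw [hV, Finset.prod_singleton]
    exact lin_iff (h0 i)
  have h := rho_bonf α V p 0 1 2 _ _ _ (hZ 0) (hZ 1) (hZ 2)
  simp only [card_one] at h
  have he : ∀ i j, (α i : ZMod p) ≠ α j →
      (Finset.univ.filter (fun c : Fin 1 → ZMod p => c 0 = -(α i : ZMod p)⁻¹ ∧ c 0 = -(α j : ZMod p)⁻¹)).card = 0 := by
    intro i j hij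
    rw [Finset.card_eq_zero, Finset.filter_eq_empty_iff]
    rintro c - ⟨h1, h2⟩
    exact hij (inv_injective (neg_injective (h1.symm.trans h2)))
  rw [he _ _ h01, he _ _ h02, he _ _ h12] at h
  norm_num at h
  have h' : (3:ℝ) ≤ rho α V p := by exact_mod_cast h
  have hp0 : (0:ℝ) < p := by exact_mod_cast hp.pos
  have h4 : 0 ≤ 4 / (p : ℝ) ^ 2 := by positivity
  have : 3 / (p : ℝ) ≤ rho α V p / (p : ℝ) := by gcongr
  rw [pow_one]
  linarith

lemma dens_fin2 (p : ℕ) (hp : p.Prime) (r : ℕ) (h : 3 * p ≤ r + 4) :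
    3 / (p : ℝ) - 4 / (p : ℝ) ^ 2 ≤ r / (p : ℝ) ^ 2 := by
  have hp0 : (0:ℝ) < p := by exact_mod_cast hp.pos
  have h' : (3 * p : ℝ) ≤ r + 4 := by exact_mod_cast h
  have e : 3 / (p : ℝ) - 4 / (p : ℝ) ^ 2 = (3 * p - 4) / (p : ℝ) ^ 2 := by field_simp
  rw [e]
  gcongr
  linarith

lemma dens_T2 (α : Fin 3 → ℕ) (p : ℕ) (hp : p.Prime) (h0 : ∀ i, (α i : ZMod p) ≠ 0) (i0 i1 i2 : Fin 3)
    (h01 : (α i0 : ZMod p) ≠ α i1)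
    (V : Fin 3 → Finset (Fin 2)) (hV0 : V i0 = {0}) (hV1 : V i1 = {0}) (hV2 : V i2 = {1}) :
    3 / (p : ℝ) - 4 / (p : ℝ) ^ 2 ≤ rho α V p / (p : ℝ) ^ 2 := by
  have : Fact p.Prime := ⟨hp⟩
  have hZ : ∀ i j, V i = {j} → ∀ c, Zf α V p i c ↔ c j = -(α i : ZMod p)⁻¹ := by
    intro i j hj c
    unfold Zf
    rw [hj, Finset.prod_singleton]
    exact lin_iff (h0 i)
  have h := rho_bonf α V p i0 i1 i2 _ _ _ (hZ i0 0 hV0) (hZ i1 0 hV1) (hZ i2 1 hV2)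
  simp only [card_one] at h
  have he :
      (Finset.univ.filter (fun c : Fin 2 → ZMod p => c 0 = -(α i0 : ZMod p)⁻¹ ∧ c 0 = -(α i1 : ZMod p)⁻¹)).card = 0 := by
    rw [Finset.card_eq_zero, Finset.filter_eq_empty_iff]
    rintro c - ⟨h1, h2⟩
    exact h01 (inv_injective (neg_injective (h1.symm.trans h2)))
  have h2 := card_two (-(α i0 : ZMod p)⁻¹) (-(α i2 : ZMod p)⁻¹)
  have h3 := card_two (-(α i1 : ZMod p)⁻¹) (-(α i2 : ZMod p)⁻¹)
  rw [he] at h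
  rw [ZMod.card] at h
  norm_num at h
  exact dens_fin2 p hp _ (by omega)

lemma dens_T3 (α : Fin 3 → ℕ) (p : ℕ) (hp : p.Prime) (h0 : ∀ i, (α i : ZMod p) ≠ 0) (i0 i1 i2 : Fin 3)
    (V : Fin 3 → Finset (Fin 2)) (hV0 : V i0 = {0, 1}) (hV1 : V i1 = {0}) (hV2 : V i2 = {1}) :
    3 / (p : ℝ) - 4 / (p : ℝ) ^ 2 ≤ rho α V p / (p : ℝ) ^ 2 := by
  have : Fact p.Prime := ⟨hp⟩
  have hZ : ∀ i j, V i = {j} → ∀ c, Zf α V p i c ↔ c j = -(α i : ZMod p)⁻¹ := by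
    intro i j hj c
    unfold Zf
    rw [hj, Finset.prod_singleton]
    exact lin_iff (h0 i)
  have hZ0 : ∀ c, Zf α V p i0 c ↔ c 0 * c 1 = -(α i0 : ZMod p)⁻¹ := by
    intro c
    unfold Zf
    rw [hV0, Finset.prod_pair (by decide)]
    exact lin_iff (h0 i0)
  have h := rho_bonf α V p i0 i1 i2 _ _ _ hZ0 (hZ i1 0 hV1) (hZ i2 1 hV2)
  simp only [card_one] at h
  have hne : ∀ i, -(α i : ZMod p)⁻¹ ≠ 0 := fun i => neg_ne_zero.2 (inv_ne_zero (h0 i))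
  have h1 : p - 1 ≤ (Finset.univ.filter (fun c : Fin 2 → ZMod p => c 0 * c 1 = -(α i0 : ZMod p)⁻¹)).card := by
    have e : (Finset.univ.filter (fun x : ZMod p => x ≠ 0)).card = p - 1 := by
      rw [Finset.filter_ne', Finset.card_erase_of_mem (Finset.mem_univ _)]
      simp
    rw [← e]
    refine Finset.card_le_card_of_injOn (fun x => ![x, -(α i0 : ZMod p)⁻¹ * x⁻¹]) ?_ ?_
    · intro x hx
      have hx : x ≠ 0 := by simpa using hx
      simp
      field_simp
    · intro x _ y _ hxy
      simpa using congrFun hxy 0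
  have h2 : (Finset.univ.filter (fun c : Fin 2 → ZMod p => c 0 * c 1 = -(α i0 : ZMod p)⁻¹ ∧ c 0 = -(α i1 : ZMod p)⁻¹)).card ≤ 1 := by
    rw [Finset.card_le_one]
    intro a ha b hb
    have ha := (Finset.mem_filter.1 ha).2
    have hb := (Finset.mem_filter.1 hb).2
    have h00 : a 0 = b 0 := ha.2.trans hb.2.symm
    have h01 : a 0 ≠ 0 := by rw [ha.2]; exact hne i1
    have h02 : a 0 * a 1 = a 0 * b 1 := by rw [ha.1, h00, hb.1]
    ext i
    fin_cases i
    · exact h00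
    · exact mul_left_cancel₀ h01 h02
  have h3 : (Finset.univ.filter (fun c : Fin 2 → ZMod p => c 0 * c 1 = -(α i0 : ZMod p)⁻¹ ∧ c 1 = -(α i2 : ZMod p)⁻¹)).card ≤ 1 := by
    rw [Finset.card_le_one]
    intro a ha b hb
    have ha := (Finset.mem_filter.1 ha).2
    have hb := (Finset.mem_filter.1 hb).2
    have h00 : a 1 = b 1 := ha.2.trans hb.2.symm
    have h01 : a 1 ≠ 0 := by rw [ha.2]; exact hne i2
    have h02 : a 0 * a 1 = b 0 * a 1 := by rw [ha.1, h00, hb.1]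
    ext i
    fin_cases i
    · exact mul_right_cancel₀ h01 h02
    · exact h00
  have h4 := card_two (-(α i1 : ZMod p)⁻¹) (-(α i2 : ZMod p)⁻¹)
  rw [ZMod.card] at h
  norm_num at h
  have := hp.pos
  exact dens_fin2 p hp _ (by omega)

lemma dens_T4 (α : Fin 3 → ℕ) (p : ℕ) (hp : p.Prime) (h0 : ∀ i, (α i : ZMod p) ≠ 0)
    (V : Fin 3 → Finset (Fin 3)) (hV : ∀ i, V i = {i}) :
    3 / (p : ℝ) - 4 / (p : ℝ) ^ 2 ≤ rho α V p / (p : ℝ) ^ 3 := by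
  have : Fact p.Prime := ⟨hp⟩
  have hZ : ∀ i c, Zf α V p i c ↔ c i = -(α i : ZMod p)⁻¹ := by
    intro i c
    unfold Zf
    rw [hV, Finset.prod_singleton]
    exact lin_iff (h0 i)
  have h := rho_bonf α V p 0 1 2 _ _ _ (hZ 0) (hZ 1) (hZ 2)
  simp only [card_one] at h
  have h2 := card_three 0 1 2 (by decide) (-(α 0 : ZMod p)⁻¹) (-(α 1 : ZMod p)⁻¹)
  have h3 := card_three 0 2 1 (by decide) (-(α 0 : ZMod p)⁻¹) (-(α 2 : ZMod p)⁻¹)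
  have h4 := card_three 1 2 0 (by decide) (-(α 1 : ZMod p)⁻¹) (-(α 2 : ZMod p)⁻¹)
  rw [ZMod.card] at h h2 h3 h4
  norm_num at h
  have h5 : 3 * p ^ 2 ≤ rho α V p + 3 * p := by omega
  have h' : (3 * p ^ 2 : ℝ) ≤ rho α V p + 3 * p := by exact_mod_cast h5
  have hp0 : (0:ℝ) < p := by exact_mod_cast hp.pos
  have e : 3 / (p : ℝ) - 4 / (p : ℝ) ^ 2 = (3 * p ^ 2 - 4 * p) / (p : ℝ) ^ 3 := by field_simp
  rw [e]
  gcongr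
  linarith


lemma resample {A B : Type*} (X : Finset A) (Y : Finset B) (φ : A → B → A) (ψ : A → B)
    (h1 : ∀ a ∈ X, ∀ b ∈ Y, φ a b ∈ X) (h2 : ∀ a ∈ X, ψ a ∈ Y) (h3 : ∀ a b, φ (φ a b) (ψ a) = a)
    (h4 : ∀ a b, ψ (φ a b) = b) (f : A → ℝ) :
    ∑ a ∈ X, ∑ b ∈ Y, f (φ a b) = Y.card * ∑ a ∈ X, f a := by
  have : ∑ a ∈ X, ∑ b ∈ Y, f a = Y.card * ∑ a ∈ X, f a := by
    simp only [Finset.sum_const, nsmul_eq_mul, Finset.mul_sum]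
  rw [← this, ← Finset.sum_product', ← Finset.sum_product']
  refine Finset.sum_nbij' (fun x => (φ x.1 x.2, ψ x.1)) (fun x => (φ x.1 x.2, ψ x.1)) ?_ ?_ ?_ ?_ ?_
  · intro x hx
    have := Finset.mem_product.1 hx
    exact Finset.mem_product.2 ⟨h1 _ this.1 _ this.2, h2 _ this.1⟩
  · intro x hx
    have := Finset.mem_product.1 hx
    exact Finset.mem_product.2 ⟨h1 _ this.1 _ this.2, h2 _ this.1⟩
  · intro x _
    simp [h3, h4]
  · intro x _
    simp [h3, h4]
  · intro x _
    rfl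

def Bx {ι : Type} [Fintype ι] [DecidableEq ι] (N : ι → ℕ) : Finset (ι → ℕ) :=
  Fintype.piFinset (fun i => Finset.Ico (N i) (2 * N i))

lemma mem_Bx {ι : Type} [Fintype ι] [DecidableEq ι] {N e : ι → ℕ} :
    e ∈ Bx N ↔ ∀ i, N i ≤ e i ∧ e i < 2 * N i := by
  simp [Bx]

lemma card_Bx {ι : Type} [Fintype ι] [DecidableEq ι] (N : ι → ℕ) : ((Bx N).card : ℝ) = ∏ i, (N i : ℝ) := by
  rw [Bx, Fintype.card_piFinset]
  push_cast
  refine Finset.prod_congr rfl fun i _ => ?_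
  rw [Nat.card_Ico]
  congr 1; omega

lemma resample_ext {k : ℕ} (σ : Fin k → Fin 7) (hσ : Function.Injective σ) (N : Fin 7 → ℕ) (f : (Fin 7 → ℕ) → ℝ) :
    ∑ e ∈ Bx N, ∑ y ∈ Bx (N ∘ σ), f (Function.extend σ y e) = (Bx (N ∘ σ)).card * ∑ e ∈ Bx N, f e := by
  refine resample (Bx N) (Bx (N ∘ σ)) (fun e y => Function.extend σ y e) (fun e => e ∘ σ) ?_ ?_ ?_ ?_ f
  · intro e he y hy
    rw [mem_Bx] at he hy ⊢
    intro i
    by_cases h : ∃ a, σ a = i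
    · obtain ⟨a, rfl⟩ := h
      rw [hσ.extend_apply]
      exact hy a
    · rw [Function.extend_apply' _ _ _ h]
      exact he i
  · intro e he
    rw [mem_Bx] at he ⊢
    exact fun a => he _
  · intro e y
    ext i
    by_cases h : ∃ a, σ a = i
    · obtain ⟨a, rfl⟩ := h
      rw [hσ.extend_apply]
      rfl
    · rw [Function.extend_apply' _ _ _ h, Function.extend_apply' _ _ _ h]
  · intro e y
    ext a
    simp [hσ.extend_apply]

lemma fiber_le (N : Fin 7 → ℕ) (i : Fin 7) (hN : 1 ≤ N i) (f : (Fin 7 → ℕ) → ℝ) (C : ℝ)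
    (h : ∀ e ∈ Bx N, ∑ n ∈ Finset.Ico (N i) (2 * N i), f (Function.update e i n) ≤ C * N i) :
    ∑ e ∈ Bx N, f e ≤ C * ∏ i, (N i : ℝ) := by
  have h1 := resample (Bx N) (Finset.Ico (N i) (2 * N i)) (fun e n => Function.update e i n) (fun e => e i) (by
    intro e he n hn
    rw [mem_Bx] at he ⊢
    rw [Finset.mem_Ico] at hn
    intro l
    by_cases hl : l = i
    · subst hl; simpa using hn
    · simpa [hl] using he l) (by
    intro e he
    rw [mem_Bx] at he
    exact Finset.mem_Ico.2 (he i)) (by simp) (by simp) f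
  have h2 := Finset.sum_le_sum h
  rw [h1, Finset.sum_const, nsmul_eq_mul, card_Bx, Nat.card_Ico] at h2
  have e : 2 * N i - N i = N i := by omega
  rw [e] at h2
  have h0 : (0:ℝ) < N i := by exact_mod_cast hN
  have : (N i : ℝ) * ∑ e ∈ Bx N, f e ≤ N i * (C * ∏ i, (N i : ℝ)) := by linarith
  exact le_of_mul_le_mul_left this h0

lemma avg_coord (K : ℕ) : ∃ C : ℝ, 0 < C ∧ ∀ (N : Fin 7 → ℕ), (∀ i, 1 ≤ N i) → ∀ i,
    ∑ e ∈ Bx N, Sg K (e i) ≤ C * ∏ i, (N i : ℝ) := by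
  obtain ⟨C, hC, h⟩ := avg_id K
  refine ⟨C, hC, fun N hN i => fiber_le N i (hN i) _ C fun e _ => ?_⟩
  simpa using h (N i)

noncomputable def Fd (K : ℝ) (i i' l l' : Fin 7) (e : Fin 7 → ℕ) : ℝ :=
  if Nat.Coprime (e i * e i') (e l * e l') ∧ e i * e i' ≠ e l * e l' then
    Sg K (((e i * e i' : ℕ) : ℤ) - (e l * e l' : ℕ)).natAbs else 0

lemma Fd_swap1 (K : ℝ) (i i' l l' : Fin 7) : Fd K i i' l l' = Fd K i' i l l' := by
  funext e
  unfold Fd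
  rw [mul_comm (e i) (e i')]

lemma Fd_swap2 (K : ℝ) (i i' l l' : Fin 7) : Fd K i i' l l' = Fd K l l' i i' := by
  funext e
  unfold Fd
  rw [← Int.natAbs_neg, neg_sub]
  exact if_congr (and_congr Nat.coprime_comm ne_comm) rfl rfl

lemma avg_Fd (K : ℕ) : ∃ C : ℝ, 0 < C ∧ ∀ (N : Fin 7 → ℕ), (∀ i, 1 ≤ N i) → ∀ i i' l l' : Fin 7,
    i ≠ i' → i ≠ l → i ≠ l' → i' ≠ l → i' ≠ l' → l ≠ l' →
    ∑ e ∈ Bx N, Fd K i i' l l' e ≤ C * ∏ i, (N i : ℝ) := by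
  obtain ⟨C, hC, h⟩ := avg_diff K
  refine ⟨C, hC, fun N hN => ?_⟩
  have key : ∀ i i' l l' : Fin 7, i ≠ i' → i ≠ l → i ≠ l' → N i' ≤ N i → N l ≤ N i → N l' ≤ N i →
      ∑ e ∈ Bx N, Fd K i i' l l' e ≤ C * ∏ i, (N i : ℝ) := by
    intro i i' l l' h1 h2 h3 h4 h5 h6
    refine fiber_le N i (hN i) _ C fun e he => ?_
    rw [mem_Bx] at he
    have := h (N i) (e i') (e l * e l') (by have := he i'; omega) (by
      calc e l * e l' ≤ (2 * N i) * (2 * N i) := Nat.mul_le_mul (by have := he l; omega) (by have := he l'; omega)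
        _ = _ := by ring)
    refine le_trans (le_of_eq ?_) this
    rw [Finset.sum_filter]
    refine Finset.sum_congr rfl fun n _ => ?_
    unfold Fd
    simp [Function.update_of_ne h1.symm, Function.update_of_ne h2.symm, Function.update_of_ne h3.symm]
  intro i i' l l' h1 h2 h3 h4 h5 h6
  have hcase : (N i' ≤ N i ∧ N l ≤ N i ∧ N l' ≤ N i) ∨ (N i ≤ N i' ∧ N l ≤ N i' ∧ N l' ≤ N i') ∨
    (N i ≤ N l ∧ N i' ≤ N l ∧ N l' ≤ N l) ∨ (N i ≤ N l' ∧ N i' ≤ N l' ∧ N l ≤ N l') := by omega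
  rcases hcase with h | h | h | h
  · exact key i i' l l' h1 h2 h3 h.1 h.2.1 h.2.2
  · rw [Fd_swap1]
    exact key i' i l l' h1.symm h4 h5 h.1 h.2.1 h.2.2
  · rw [Fd_swap2]
    exact key l l' i i' h6 h2.symm h4.symm h.2.2 h.1 h.2.1
  · rw [Fd_swap2, Fd_swap1]
    exact key l' l i i' h6.symm h3.symm h5.symm h.2.2 h.1 h.2.1

lemma Sg_prod_le {ι : Type*} (s : Finset ι) (f : ι → ℕ) : Sg 3 (∏ i ∈ s, f i) ≤ ∏ i ∈ s, Sg 3 (f i) := by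
  classical
  induction s using Finset.induction_on with
  | empty => simp [Sg]
  | insert a s ha ih =>
    rw [Finset.prod_insert ha, Finset.prod_insert ha]
    refine (Sg_mul_le 3 (by norm_num) _ _).trans ?_
    have := Sg_ge_one 3 (by norm_num) (f a)
    gcongr

lemma Sg_pow : ∃ K : ℕ, ∀ n : ℕ, Sg 3 n ^ 10 ≤ Sg K n := by
  refine ⟨4 ^ 10, fun n => ?_⟩
  unfold Sg
  rw [← Finset.prod_pow]
  refine Finset.prod_le_prod (fun p _ => by positivity) fun p hp => ?_
  have hp1 : (1:ℝ) ≤ p := by exact_mod_cast (Nat.prime_of_mem_primeFactors hp).one_le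
  have hp0 : (0:ℝ) < p := by linarith
  obtain ⟨t, ht⟩ : ∃ t : ℝ, t = 1 / p := ⟨_, rfl⟩
  have ht0 : 0 ≤ t := by rw [ht]; positivity
  have ht1 : t ≤ 1 := by rw [ht, div_le_one hp0]; exact hp1
  have e1 : 1 + 3 / (p : ℝ) = (1 - t) * 1 + t * 4 := by rw [ht]; field_simp; ring
  have e2 : 1 + ((4 ^ 10 : ℕ) : ℝ) / p = 1 + 4 ^ 10 * t := by rw [ht]; push_cast; ring
  rw [e1, e2]
  have h1 : (1:ℝ) ∈ Set.Ici (0:ℝ) := by simp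
  have h4 : (4:ℝ) ∈ Set.Ici (0:ℝ) := by simp
  have := (convexOn_pow (𝕜 := ℝ) 10).2 h1 h4 (sub_nonneg.2 ht1) ht0 (by ring)
  simp only [smul_eq_mul] at this
  refine this.trans ?_
  linarith

lemma prod_le_sum_pow {ι : Type*} (s : Finset ι) (hs : s.Nonempty) (n : ℕ) (hn : s.card ≤ n) (a : ι → ℝ)
    (ha : ∀ i, 1 ≤ a i) : ∏ i ∈ s, a i ≤ ∑ i ∈ s, a i ^ n := by
  obtain ⟨j, hj, hmax⟩ := Finset.exists_max_image s a hs
  calc ∏ i ∈ s, a i ≤ ∏ i ∈ s, a j := Finset.prod_le_prod (fun i _ => by linarith [ha i]) hmax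
    _ = a j ^ s.card := by simp
    _ ≤ a j ^ n := pow_le_pow_right₀ (ha j) hn
    _ ≤ _ := Finset.single_le_sum (f := fun i => a i ^ n) (fun i _ => by have := ha i; positivity) hj


def Mi : Fin 3 → Finset (Fin 7) := ![{0, 1, 2, 4}, {0, 1, 3, 5}, {0, 2, 3, 6}]

def IL : Fin 3 → Fin 7 := ![2, 1, 1]
def IL' : Fin 3 → Fin 7 := ![4, 4, 5]
def IR : Fin 3 → Fin 7 := ![3, 3, 2]
def IR' : Fin 3 → Fin 7 := ![5, 6, 6]

def dl (t : Fin 3) (e : Fin 7 → ℕ) : ℕ := e (IL t) * e (IL' t)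
def dr (t : Fin 3) (e : Fin 7 → ℕ) : ℕ := e (IR t) * e (IR' t)

def Gd (e : Fin 7 → ℕ) : Prop :=
  (∀ i, (∏ s ∈ Mi i, e s + 1).Prime) ∧ ∀ t, Nat.Coprime (dl t e) (dr t e) ∧ dl t e ≠ dr t e

instance : DecidablePred Gd := fun e => by unfold Gd; infer_instance

def al {k : ℕ} (σ : Fin k → Fin 7) (e : Fin 7 → ℕ) (i : Fin 3) : ℕ :=
  ∏ s ∈ (Mi i).filter (fun s => ¬ ∃ a, σ a = s), e s

def Vs {k : ℕ} (σ : Fin k → Fin 7) (i : Fin 3) : Finset (Fin k) := Finset.univ.filter (fun a => σ a ∈ Mi i)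

lemma form_ext {k : ℕ} (σ : Fin k → Fin 7) (hσ : Function.Injective σ) (e : Fin 7 → ℕ) (y : Fin k → ℕ) (i : Fin 3) :
    ∏ s ∈ Mi i, Function.extend σ y e s = al σ e i * ∏ a ∈ Vs σ i, y a := by
  rw [← Finset.prod_filter_mul_prod_filter_not (Mi i) (fun s => ∃ a, σ a = s), mul_comm]
  congr 1
  · refine Finset.prod_congr rfl fun s hs => ?_
    rw [Function.extend_apply' _ _ _ (Finset.mem_filter.1 hs).2]
  · have : (Mi i).filter (fun s => ∃ a, σ a = s) = (Vs σ i).image σ := by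
      ext s
      simp only [Finset.mem_filter, Finset.mem_image, Vs, Finset.mem_univ, true_and]
      constructor
      · rintro ⟨h, a, rfl⟩; exact ⟨a, h, rfl⟩
      · rintro ⟨a, h, rfl⟩; exact ⟨h, a, rfl⟩
    rw [this, Finset.prod_image hσ.injOn]
    exact Finset.prod_congr rfl fun a _ => hσ.extend_apply _ _ _

/-- the modulus collecting exceptional primes -/
def Em (T : Finset (Fin 3)) (e : Fin 7 → ℕ) : ℕ :=
  (∏ s, e s) * ∏ t ∈ T, ((dl t e : ℤ) - (dr t e : ℕ)).natAbs

def Qd (T : Finset (Fin 3)) (e : Fin 7 → ℕ) : Prop := ∀ t ∈ T, Nat.Coprime (dl t e) (dr t e) ∧ dl t e ≠ dr t e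

instance (T : Finset (Fin 3)) : DecidablePred (Qd T) := fun e => by unfold Qd; infer_instance

lemma Em_avg : ∃ C : ℝ, 0 < C ∧ ∀ (T : Finset (Fin 3)) (N : Fin 7 → ℕ), (∀ i, 1 ≤ N i) →
    ∑ e ∈ Bx N, (if Qd T e then Sg 3 (Em T e) else 0) ≤ C * ∏ i, (N i : ℝ) := by
  obtain ⟨K, hK⟩ := Sg_pow
  obtain ⟨C1, hC1, h1⟩ := avg_coord K
  obtain ⟨C2, hC2, h2⟩ := avg_Fd K
  refine ⟨7 * C1 + 3 * C2, by positivity, fun T N hN => ?_⟩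
  have hK0 : (0:ℝ) ≤ K := by positivity
  have hpt : ∀ e, (if Qd T e then Sg 3 (Em T e) else 0) ≤
      ∑ s, Sg K (e s) + ∑ t : Fin 3, Fd K (IL t) (IL' t) (IR t) (IR' t) e := by
    intro e
    have hF0 : ∀ t, 0 ≤ Fd K (IL t) (IL' t) (IR t) (IR' t) e := by
      intro t
      unfold Fd
      split_ifs
      · exact zero_le_one.trans (Sg_ge_one _ hK0 _)
      · exact le_rfl
    have hS0 : ∀ s, 0 ≤ Sg K (e s) := fun s => zero_le_one.trans (Sg_ge_one _ hK0 _)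
    split_ifs with hQ
    · have e1 : Em T e = ∏ i ∈ Finset.univ.disjSum T, Sum.elim (fun s => e s) (fun t => ((dl t e : ℤ) - (dr t e : ℕ)).natAbs) i := by
        rw [Finset.prod_disjSum]
        rfl
      rw [e1]
      refine (Sg_prod_le _ _).trans ?_
      refine (prod_le_sum_pow (Finset.univ.disjSum T) ⟨Sum.inl 0, by simp⟩ 10 ?_ _
        (fun i => Sg_ge_one 3 (by norm_num) _)).trans ?_
      · rw [Finset.card_disjSum]
        have := Finset.card_le_univ T
        simp at this ⊢
        omega
      rw [Finset.sum_disjSum]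
      refine add_le_add (Finset.sum_le_sum fun s _ => hK _) ?_
      refine le_trans ?_ (Finset.sum_le_sum_of_subset_of_nonneg (Finset.subset_univ T) fun t _ _ => hF0 t)
      refine Finset.sum_le_sum fun t ht => (hK _).trans ?_
      unfold Fd
      have := hQ t ht
      unfold dl dr at this
      rw [if_pos this]
      exact le_rfl
    · exact add_nonneg (Finset.sum_nonneg fun s _ => hS0 s) (Finset.sum_nonneg fun t _ => hF0 t)
  refine (Finset.sum_le_sum fun e _ => hpt e).trans ?_
  rw [Finset.sum_add_distrib, Finset.sum_comm, Finset.sum_comm (s := Bx N) (t := (Finset.univ : Finset (Fin 3)))]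
  have h3 : ∑ s : Fin 7, ∑ e ∈ Bx N, Sg K (e s) ≤ 7 * (C1 * ∏ i, (N i : ℝ)) := by
    refine (Finset.sum_le_sum fun s _ => h1 N hN s).trans ?_
    simp
  have h4 : ∑ t : Fin 3, ∑ e ∈ Bx N, Fd K (IL t) (IL' t) (IR t) (IR' t) e ≤ 3 * (C2 * ∏ i, (N i : ℝ)) := by
    have hd : ∀ t, IL t ≠ IL' t ∧ IL t ≠ IR t ∧ IL t ≠ IR' t ∧ IL' t ≠ IR t ∧ IL' t ≠ IR' t ∧ IR t ≠ IR' t := by decide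
    refine (Finset.sum_le_sum fun t _ => h2 N hN _ _ _ _ (hd t).1 (hd t).2.1 (hd t).2.2.1 (hd t).2.2.2.1
      (hd t).2.2.2.2.1 (hd t).2.2.2.2.2).trans ?_
    simp
  linarith

theorem box_gen : ∃ C : ℝ, 0 < C ∧ ∀ (k : ℕ) (_ : k ≤ 3) (σ : Fin k → Fin 7) (_ : Function.Injective σ) (T : Finset (Fin 3)),
    (∀ i, (Vs σ i).Nonempty) →
    (∀ t ∈ T, ∀ a, σ a ≠ IL t ∧ σ a ≠ IL' t ∧ σ a ≠ IR t ∧ σ a ≠ IR' t) →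
    (∀ (e : Fin 7 → ℕ) (p : ℕ), p.Prime → (∀ s, (e s : ZMod p) ≠ 0) →
      (∀ t ∈ T, (dl t e : ZMod p) ≠ dr t e) →
      3 / (p : ℝ) - 4 / (p : ℝ) ^ 2 ≤ rho (al σ e) (Vs σ) p / (p : ℝ) ^ k) →
    ∀ (N : Fin 7 → ℕ) (m : ℕ), (∀ i, 1 ≤ N i) → (∀ a, 2 ^ m ≤ N (σ a)) →
    (((Bx N).filter Gd).card : ℝ) ≤ C * (∏ i, (N i : ℝ)) / (m + 1 : ℝ) ^ 3 := by
  obtain ⟨C1, hC1, h1⟩ := sieve_box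
  obtain ⟨C2, hC2, h2⟩ := Em_avg
  refine ⟨C1 * C2, by positivity, ?_⟩
  intro k hk σ hσ T hV hT hdens N m hN hm
  have hr := resample_ext σ hσ N (fun e => if Gd e then 1 else 0)
  have hb : (0:ℝ) < (Bx (N ∘ σ)).card := by
    rw [card_Bx]
    exact Finset.prod_pos fun i _ => by exact_mod_cast hN (σ i)
  have hin : ∀ e ∈ Bx N, ∑ y ∈ Bx (N ∘ σ), (if Gd (Function.extend σ y e) then (1:ℝ) else 0) ≤
      (Bx (N ∘ σ)).card * (C1 / (m + 1 : ℝ) ^ 3) * (if Qd T e then Sg 3 (Em T e) else 0) := by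
    intro e he
    rw [mem_Bx] at he
    have he1 : ∀ s, 1 ≤ e s := fun s => (hN s).trans (he s).1
    have hdd : ∀ t ∈ T, ∀ y, dl t (Function.extend σ y e) = dl t e ∧ dr t (Function.extend σ y e) = dr t e := by
      intro t ht y
      have h := hT t ht
      unfold dl dr
      rw [Function.extend_apply' _ _ (IL t) (fun ⟨a, ha⟩ => (h a).1 ha),
        Function.extend_apply' _ _ (IL' t) (fun ⟨a, ha⟩ => (h a).2.1 ha),
        Function.extend_apply' _ _ (IR t) (fun ⟨a, ha⟩ => (h a).2.2.1 ha),
        Function.extend_apply' _ _ (IR' t) (fun ⟨a, ha⟩ => (h a).2.2.2 ha)]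
      exact ⟨rfl, rfl⟩
    split_ifs with hQ
    · have hE : Em T e ≠ 0 := by
        unfold Em
        refine mul_ne_zero (Finset.prod_ne_zero_iff.2 fun s _ => by have := he1 s; omega) ?_
        refine Finset.prod_ne_zero_iff.2 fun t ht => ?_
        have := (hQ t ht).2
        omega
      have h3 := h1 k hk (al σ e) (Vs σ) (N ∘ σ) (Em T e) m
        (fun i => by
          have : 0 < al σ e i := Finset.prod_pos fun s _ => Nat.lt_of_lt_of_le Nat.zero_lt_one (he1 s)
          exact this) hV hE ?_ hm
      · rw [← card_Bx] at h3
        calc _ ≤ (((Fintype.piFinset (fun i => Finset.Ico ((N ∘ σ) i) (2 * (N ∘ σ) i))).filter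
              (fun x => ∀ i, (al σ e i * ∏ s ∈ Vs σ i, x s + 1).Prime)).card : ℝ) := by
              rw [← Finset.sum_filter, Finset.sum_const, nsmul_eq_mul, mul_one]
              norm_cast
              refine Finset.card_le_card fun y hy => ?_
              obtain ⟨hy1, hy2⟩ := Finset.mem_filter.1 hy
              refine Finset.mem_filter.2 ⟨hy1, fun i => ?_⟩
              rw [← form_ext σ hσ]
              exact hy2.1 i
          _ ≤ _ := h3
          _ = _ := by ring
      · intro p hp hp3 hpE
        have hpe : ¬ p ∣ ∏ s, e s := fun h => hpE (h.mul_right _)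
        have hpd : ¬ p ∣ ∏ t ∈ T, ((dl t e : ℤ) - (dr t e : ℕ)).natAbs := fun h => hpE (h.mul_left _)
        refine hdens e p hp (fun s hs => hpe ?_) (fun t ht hd => hpd ?_)
        · exact ((ZMod.natCast_eq_zero_iff _ _).1 hs).trans (Finset.dvd_prod_of_mem _ (Finset.mem_univ s))
        · refine dvd_trans ?_ (Finset.dvd_prod_of_mem _ ht)
          rw [← Int.natCast_dvd, ← ZMod.intCast_zmod_eq_zero_iff_dvd]
          push_cast
          rw [hd, sub_self]
    · rw [mul_zero]
      refine le_of_eq (Finset.sum_eq_zero fun y _ => if_neg fun hg => hQ fun t ht => ?_)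
      have := hg.2 t
      rw [(hdd t ht y).1, (hdd t ht y).2] at this
      exact this
  have h4 := Finset.sum_le_sum hin
  rw [hr, ← Finset.mul_sum, mul_assoc] at h4
  have h5 := le_of_mul_le_mul_left h4 hb
  rw [← Finset.sum_filter, Finset.sum_const, nsmul_eq_mul, mul_one] at h5
  refine h5.trans ?_
  calc C1 / (m + 1 : ℝ) ^ 3 * ∑ e ∈ Bx N, (if Qd T e then Sg 3 (Em T e) else 0)
      ≤ C1 / (m + 1 : ℝ) ^ 3 * (C2 * ∏ i, (N i : ℝ)) := by gcongr; exact h2 T N hN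
    _ = _ := by ring

lemma al_ne {k : ℕ} (σ : Fin k → Fin 7) (e : Fin 7 → ℕ) (p : ℕ) (hp : p.Prime) (h : ∀ s, (e s : ZMod p) ≠ 0) (i : Fin 3) :
    (al σ e i : ZMod p) ≠ 0 := by
  have : Fact p.Prime := ⟨hp⟩
  unfold al
  push_cast
  exact Finset.prod_ne_zero_iff.2 fun s _ => h s

/-- the cover condition: j is large on one of the minimal covers -/
theorem box_cov : ∃ C : ℝ, 0 < C ∧ ∀ (N : Fin 7 → ℕ) (m : ℕ), (∀ i, 1 ≤ N i) →
    (∀ i, ∃ s ∈ Mi i, 2 ^ m ≤ N s) →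
    (((Bx N).filter Gd).card : ℝ) ≤ C * (∏ i, (N i : ℝ)) / (m + 1 : ℝ) ^ 3 := by
  obtain ⟨C, hC, h⟩ := box_gen
  refine ⟨C, hC, fun N m hN hm => ?_⟩
  have c0 : 2 ^ m ≤ N 0 → (((Bx N).filter Gd).card : ℝ) ≤ C * (∏ i, (N i : ℝ)) / (m + 1 : ℝ) ^ 3 := by
    intro h0
    refine h 1 (by norm_num) ![0] (by decide) Finset.univ (by decide) (by decide) ?_ N m hN (by simpa using h0)
    intro e p hp he ht
    have : Fact p.Prime := ⟨hp⟩
    have a0 : al ![0] e 0 = e 1 * (e 2 * e 4) := by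
      unfold al
      rw [show (Mi 0).filter (fun s => ¬ ∃ a, (![0] : Fin 1 → Fin 7) a = s) = {1, 2, 4} by decide]
      simp
    have a1 : al ![0] e 1 = e 1 * (e 3 * e 5) := by
      unfold al
      rw [show (Mi 1).filter (fun s => ¬ ∃ a, (![0] : Fin 1 → Fin 7) a = s) = {1, 3, 5} by decide]
      simp
    have a2 : al ![0] e 2 = e 2 * (e 3 * e 6) := by
      unfold al
      rw [show (Mi 2).filter (fun s => ¬ ∃ a, (![0] : Fin 1 → Fin 7) a = s) = {2, 3, 6} by decide]
      simp
    have t0 := ht 0 (by simp)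
    have t1 := ht 1 (by simp)
    have t2 := ht 2 (by simp)
    simp [dl, dr, IL, IL', IR, IR'] at t0 t1 t2
    refine dens_T1 _ p hp (al_ne _ e p hp he) ?_ ?_ ?_ _ (by decide)
    · rw [a0, a1]; push_cast
      exact fun hh => t0 (mul_left_cancel₀ (he 1) hh)
    · rw [a0, a2]; push_cast
      exact fun hh => t1 (mul_left_cancel₀ (he 2) (by linear_combination hh))
    · rw [a1, a2]; push_cast
      exact fun hh => t2 (mul_left_cancel₀ (he 3) (by linear_combination hh))
  have c16 : 2 ^ m ≤ N 1 → 2 ^ m ≤ N 6 → (((Bx N).filter Gd).card : ℝ) ≤ C * (∏ i, (N i : ℝ)) / (m + 1 : ℝ) ^ 3 := by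
    intro h0 h1
    refine h 2 (by norm_num) ![1, 6] (by decide) {0} (by decide) (by decide) ?_ N m hN (by intro a; fin_cases a <;> assumption)
    intro e p hp he ht
    have : Fact p.Prime := ⟨hp⟩
    have a0 : al ![1, 6] e 0 = e 0 * (e 2 * e 4) := by
      unfold al
      rw [show (Mi 0).filter (fun s => ¬ ∃ a, (![1, 6] : Fin 2 → Fin 7) a = s) = {0, 2, 4} by decide]
      simp
    have a1 : al ![1, 6] e 1 = e 0 * (e 3 * e 5) := by
      unfold al
      rw [show (Mi 1).filter (fun s => ¬ ∃ a, (![1, 6] : Fin 2 → Fin 7) a = s) = {0, 3, 5} by decide]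
      simp
    have t0 := ht 0 (by simp)
    simp [dl, dr, IL, IL', IR, IR'] at t0
    refine dens_T2 _ p hp (al_ne _ e p hp he) 0 1 2 ?_ _ (by decide) (by decide) (by decide)
    rw [a0, a1]; push_cast
    exact fun hh => t0 (mul_left_cancel₀ (he 0) hh)
  have c25 : 2 ^ m ≤ N 2 → 2 ^ m ≤ N 5 → (((Bx N).filter Gd).card : ℝ) ≤ C * (∏ i, (N i : ℝ)) / (m + 1 : ℝ) ^ 3 := by
    intro h0 h1
    refine h 2 (by norm_num) ![2, 5] (by decide) {1} (by decide) (by decide) ?_ N m hN (by intro a; fin_cases a <;> assumption)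
    intro e p hp he ht
    have : Fact p.Prime := ⟨hp⟩
    have a0 : al ![2, 5] e 0 = e 0 * (e 1 * e 4) := by
      unfold al
      rw [show (Mi 0).filter (fun s => ¬ ∃ a, (![2, 5] : Fin 2 → Fin 7) a = s) = {0, 1, 4} by decide]
      simp
    have a1 : al ![2, 5] e 2 = e 0 * (e 3 * e 6) := by
      unfold al
      rw [show (Mi 2).filter (fun s => ¬ ∃ a, (![2, 5] : Fin 2 → Fin 7) a = s) = {0, 3, 6} by decide]
      simp
    have t0 := ht 1 (by simp)
    simp [dl, dr, IL, IL', IR, IR'] at t0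
    refine dens_T2 _ p hp (al_ne _ e p hp he) 0 2 1 ?_ _ (by decide) (by decide) (by decide)
    rw [a0, a1]; push_cast
    exact fun hh => t0 (mul_left_cancel₀ (he 0) hh)
  have c34 : 2 ^ m ≤ N 3 → 2 ^ m ≤ N 4 → (((Bx N).filter Gd).card : ℝ) ≤ C * (∏ i, (N i : ℝ)) / (m + 1 : ℝ) ^ 3 := by
    intro h0 h1
    refine h 2 (by norm_num) ![3, 4] (by decide) {2} (by decide) (by decide) ?_ N m hN (by intro a; fin_cases a <;> assumption)
    intro e p hp he ht
    have : Fact p.Prime := ⟨hp⟩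
    have a0 : al ![3, 4] e 1 = e 0 * (e 1 * e 5) := by
      unfold al
      rw [show (Mi 1).filter (fun s => ¬ ∃ a, (![3, 4] : Fin 2 → Fin 7) a = s) = {0, 1, 5} by decide]
      simp
    have a1 : al ![3, 4] e 2 = e 0 * (e 2 * e 6) := by
      unfold al
      rw [show (Mi 2).filter (fun s => ¬ ∃ a, (![3, 4] : Fin 2 → Fin 7) a = s) = {0, 2, 6} by decide]
      simp
    have t0 := ht 2 (by simp)
    simp [dl, dr, IL, IL', IR, IR'] at t0
    refine dens_T2 _ p hp (al_ne _ e p hp he) 1 2 0 ?_ _ (by decide) (by decide) (by decide)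
    rw [a0, a1]; push_cast
    exact fun hh => t0 (mul_left_cancel₀ (he 0) hh)
  have c12 : 2 ^ m ≤ N 1 → 2 ^ m ≤ N 2 → (((Bx N).filter Gd).card : ℝ) ≤ C * (∏ i, (N i : ℝ)) / (m + 1 : ℝ) ^ 3 := by
    intro h0 h1
    refine h 2 (by norm_num) ![1, 2] (by decide) ∅ (by decide) (by decide) ?_ N m hN (by intro a; fin_cases a <;> assumption)
    intro e p hp he ht
    exact dens_T3 _ p hp (al_ne _ e p hp he) 0 1 2 _ (by decide) (by decide) (by decide)
  have c13 : 2 ^ m ≤ N 1 → 2 ^ m ≤ N 3 → (((Bx N).filter Gd).card : ℝ) ≤ C * (∏ i, (N i : ℝ)) / (m + 1 : ℝ) ^ 3 := by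
    intro h0 h1
    refine h 2 (by norm_num) ![1, 3] (by decide) ∅ (by decide) (by decide) ?_ N m hN (by intro a; fin_cases a <;> assumption)
    intro e p hp he ht
    exact dens_T3 _ p hp (al_ne _ e p hp he) 1 0 2 _ (by decide) (by decide) (by decide)
  have c23 : 2 ^ m ≤ N 2 → 2 ^ m ≤ N 3 → (((Bx N).filter Gd).card : ℝ) ≤ C * (∏ i, (N i : ℝ)) / (m + 1 : ℝ) ^ 3 := by
    intro h0 h1
    refine h 2 (by norm_num) ![2, 3] (by decide) ∅ (by decide) (by decide) ?_ N m hN (by intro a; fin_cases a <;> assumption)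
    intro e p hp he ht
    exact dens_T3 _ p hp (al_ne _ e p hp he) 2 0 1 _ (by decide) (by decide) (by decide)
  have c456 : 2 ^ m ≤ N 4 → 2 ^ m ≤ N 5 → 2 ^ m ≤ N 6 →
      (((Bx N).filter Gd).card : ℝ) ≤ C * (∏ i, (N i : ℝ)) / (m + 1 : ℝ) ^ 3 := by
    intro h0 h1 h2
    refine h 3 (by norm_num) ![4, 5, 6] (by decide) ∅ (by decide) (by decide) ?_ N m hN (by intro a; fin_cases a <;> assumption)
    intro e p hp he ht
    exact dens_T4 _ p hp (al_ne _ e p hp he) _ (by decide)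
  have m0 := hm 0
  have m1 := hm 1
  have m2 := hm 2
  simp only [Mi, Matrix.cons_val_zero, Matrix.cons_val_one, Matrix.cons_val, Finset.mem_insert, Finset.mem_singleton,
    exists_eq_or_imp, exists_eq_left] at m0 m1 m2
  rcases m0 with m0 | m0 | m0 | m0
  · exact c0 m0
  · rcases m2 with m2 | m2 | m2 | m2
    · exact c0 m2
    · exact c12 m0 m2
    · exact c13 m0 m2
    · exact c16 m0 m2
  · rcases m1 with m1 | m1 | m1 | m1
    · exact c0 m1
    · exact c12 m1 m0
    · exact c23 m0 m1
    · exact c25 m0 m1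
  · rcases m1 with m1 | m1 | m1 | m1
    · exact c0 m1
    · rcases m2 with m2 | m2 | m2 | m2
      · exact c0 m2
      · exact c12 m1 m2
      · exact c13 m1 m2
      · exact c16 m1 m2
    · exact c34 m1 m0
    · rcases m2 with m2 | m2 | m2 | m2
      · exact c0 m2
      · exact c25 m2 m1
      · exact c34 m2 m0
      · exact c456 m0 m1 m2


def Rb (n : ℕ) : Finset (Fin 7 → ℕ) := Fintype.piFinset (fun _ => Finset.range (n + 1))

lemma mem_Rb {n : ℕ} {j : Fin 7 → ℕ} : j ∈ Rb n ↔ ∀ s, j s ≤ n := by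
  simp [Rb]

noncomputable def wj (i : Fin 3) (s : Fin 7) (j : Fin 7 → ℕ) : ℝ :=
  if ∀ t ∈ Mi i, j t ≤ j s then 1 / ((j s : ℝ) + 1) ^ 3 else 0

noncomputable def gj (n : ℕ) (j : Fin 7 → ℕ) : ℝ := if ∑ t, j t ≤ n then 2 ^ (∑ t, j t) else 0

lemma wj_nonneg (i : Fin 3) (s : Fin 7) (j : Fin 7 → ℕ) : 0 ≤ wj i s j := by
  unfold wj
  split_ifs
  · positivity
  · exact le_rfl

lemma prod_pat (A B : ℕ) (i : Fin 3) (s : Fin 7) (hs : s ∈ Mi i) :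
    ∏ t : Fin 7, (if t = s then 1 else if t ∈ Mi i then B else A) = B ^ 3 * A ^ 3 := by
  have h1 : ∀ i s, s ∈ Mi i → ((Finset.univ.filter (fun t : Fin 7 => ¬ t = s)).filter (fun t => t ∈ Mi i)).card = 3 := by
    decide
  have h2 : ∀ i s, s ∈ Mi i → ((Finset.univ.filter (fun t : Fin 7 => ¬ t = s)).filter (fun t => ¬ t ∈ Mi i)).card = 3 := by
    decide
  rw [Finset.prod_ite, Finset.prod_const_one, one_mul, Finset.prod_ite, Finset.prod_const, Finset.prod_const,
    h1 i s hs, h2 i s hs]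

lemma sum_wj (n : ℕ) (i : Fin 3) (s : Fin 7) (hs : s ∈ Mi i) : ∑ j ∈ Rb n, wj i s j ≤ (n + 1 : ℝ) ^ 4 := by
  rw [← Finset.sum_fiberwise_of_maps_to (s := Rb n) (t := Finset.range (n + 1)) (g := fun j => j s)
    (fun j hj => Finset.mem_range.2 (Nat.lt_succ_of_le (mem_Rb.1 hj s)))]
  have : ∀ b ∈ Finset.range (n + 1), ∑ j ∈ (Rb n).filter (fun j => j s = b), wj i s j ≤ (n + 1 : ℝ) ^ 3 := by
    intro b _
    have h1 : ((Rb n).filter (fun j => j s = b)).filter (fun j => ∀ t ∈ Mi i, j t ≤ j s) ⊆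
        Fintype.piFinset (fun t => if t = s then {b} else if t ∈ Mi i then Finset.range (b + 1) else Finset.range (n + 1)) := by
      intro j hj
      obtain ⟨hj1, hj2⟩ := Finset.mem_filter.1 hj
      obtain ⟨hj3, hj4⟩ := Finset.mem_filter.1 hj1
      rw [mem_Rb] at hj3
      rw [Fintype.mem_piFinset]
      intro t
      split_ifs with h h'
      · subst h; simpa using hj4
      · rw [← hj4]; exact Finset.mem_range.2 (Nat.lt_succ_of_le (hj2 t h'))
      · exact Finset.mem_range.2 (Nat.lt_succ_of_le (hj3 t))
    have h2 := Finset.card_le_card h1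
    rw [Fintype.card_piFinset] at h2
    have h3 : ∀ t, (if t = s then ({b} : Finset ℕ) else if t ∈ Mi i then Finset.range (b + 1) else Finset.range (n + 1)).card =
        if t = s then 1 else if t ∈ Mi i then b + 1 else n + 1 := by
      intro t; split_ifs <;> simp
    simp only [h3] at h2
    rw [prod_pat _ _ i s hs] at h2
    have h4 : ∑ j ∈ (Rb n).filter (fun j => j s = b), wj i s j =
        ((((Rb n).filter (fun j => j s = b)).filter (fun j => ∀ t ∈ Mi i, j t ≤ j s)).card : ℝ) * (1 / ((b : ℝ) + 1) ^ 3) := by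
      unfold wj
      rw [← Finset.sum_filter, ← nsmul_eq_mul, ← Finset.sum_const]
      refine Finset.sum_congr rfl fun j hj => ?_
      rw [(Finset.mem_filter.1 (Finset.mem_filter.1 hj).1).2]
    rw [h4]
    have h5 : ((((Rb n).filter (fun j => j s = b)).filter (fun j => ∀ t ∈ Mi i, j t ≤ j s)).card : ℝ) ≤
      ((b : ℝ) + 1) ^ 3 * ((n : ℝ) + 1) ^ 3 := by exact_mod_cast h2
    calc _ ≤ (((b : ℝ) + 1) ^ 3 * ((n : ℝ) + 1) ^ 3) * (1 / ((b : ℝ) + 1) ^ 3) := by gcongr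
      _ = _ := by field_simp
  refine (Finset.sum_le_sum this).trans (le_of_eq ?_)
  rw [Finset.sum_const, nsmul_eq_mul, Finset.card_range]
  push_cast
  ring

lemma geo (n T : ℕ) : ∑ a ∈ Finset.range (n + 1), (if T + a ≤ n then (2:ℝ) ^ (T + a) else 0) ≤ 2 * 2 ^ n := by
  rw [← Finset.sum_filter]
  refine (sum_le_inj _ (Finset.range (n + 1)) _ (fun c => (2:ℝ) ^ c) (fun a => T + a) ?_ ?_ (fun _ _ => le_rfl)
    (fun _ _ => by positivity)).trans ?_
  · intro a ha
    exact Finset.mem_range.2 (Nat.lt_succ_of_le (Finset.mem_filter.1 ha).2)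
  · intro a _ b _ h
    simpa using h
  · rw [geom_sum_eq (by norm_num), pow_succ]
    norm_num
    linarith

lemma sum_gw (n : ℕ) (i : Fin 3) (s : Fin 7) (hs : s ∈ Mi i) :
    ∑ j ∈ Rb n, gj n j * wj i s j ≤ 2 * 2 ^ n * (n + 1 : ℝ) ^ 3 := by
  obtain ⟨r, hr⟩ : ∃ r, r ∉ Mi i := by clear hs; revert i; decide
  have hrs : s ≠ r := fun h => hr (h ▸ hs)
  have h1 := resample (Rb n) (Finset.range (n + 1)) (fun j a => Function.update j r a) (fun j => j r) (by
    intro e he a ha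
    rw [mem_Rb] at he ⊢
    rw [Finset.mem_range] at ha
    intro l
    by_cases hl : l = r
    · subst hl; simp; omega
    · simpa [hl] using he l) (by
    intro e he
    rw [mem_Rb] at he
    exact Finset.mem_range.2 (Nat.lt_succ_of_le (he r))) (by simp) (by simp) (fun j => gj n j * wj i s j)
  have h2 : ∀ j ∈ Rb n, ∑ a ∈ Finset.range (n + 1), gj n (Function.update j r a) * wj i s (Function.update j r a) ≤
      2 * 2 ^ n * wj i s j := by
    intro j _
    have e1 : ∀ a, wj i s (Function.update j r a) = wj i s j := by
      intro a
      unfold wj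
      rw [Function.update_of_ne hrs]
      refine if_congr (forall₂_congr fun t ht => ?_) rfl rfl
      have htr : t ≠ r := fun h => hr (h ▸ ht)
      rw [Function.update_of_ne htr]
    have e2 : ∀ a, ∑ t, Function.update j r a t = ∑ t ∈ Finset.univ \ {r}, j t + a := by
      intro a
      rw [Finset.sum_update_of_mem (Finset.mem_univ r), add_comm]
    simp only [e1]
    rw [← Finset.sum_mul]
    refine mul_le_mul_of_nonneg_right ?_ (wj_nonneg _ _ _)
    unfold gj
    simp only [e2]
    exact geo n _
  have h3 := Finset.sum_le_sum h2
  rw [h1, ← Finset.mul_sum, Finset.card_range] at h3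
  have h4 := sum_wj n i s hs
  have hn : (0:ℝ) < ((n + 1 : ℕ) : ℝ) := by positivity
  refine le_of_mul_le_mul_left ?_ hn
  refine h3.trans ?_
  calc _ ≤ 2 * 2 ^ n * (n + 1 : ℝ) ^ 4 := by gcongr
    _ = _ := by push_cast; ring

theorem good_count : ∃ C : ℝ, 0 < C ∧ ∀ (X : ℕ) (S : Finset (Fin 7 → ℕ)), 1 ≤ X →
    (∀ e ∈ S, Gd e ∧ (∀ s, 1 ≤ e s) ∧ ∏ s, e s ≤ X) →
    (S.card : ℝ) ≤ C * 2 ^ (Nat.log 2 X) * ((Nat.log 2 X : ℝ) + 1) ^ 3 := by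
  obtain ⟨C, hC, h⟩ := box_cov
  refine ⟨C * 24, by positivity, fun X S hX hS => ?_⟩
  set n := Nat.log 2 X with hn
  have hsum : ∀ e ∈ S, ∑ s, Nat.log 2 (e s) ≤ n := by
    intro e he
    obtain ⟨-, h1, h2⟩ := hS e he
    rw [hn]
    refine Nat.le_log_of_pow_le (by norm_num) (le_trans ?_ h2)
    rw [← Finset.prod_pow_eq_pow_sum]
    exact Finset.prod_le_prod' fun s _ => Nat.pow_log_le_self 2 (by have := h1 s; omega)
  have hmaps : ∀ e ∈ S, (fun s => Nat.log 2 (e s)) ∈ Rb n := by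
    intro e he
    rw [mem_Rb]
    intro s
    exact (Finset.single_le_sum (f := fun s => Nat.log 2 (e s)) (fun _ _ => Nat.zero_le _) (Finset.mem_univ s)).trans (hsum e he)
  have hcard : (S.card : ℝ) = ∑ j ∈ Rb n, ((S.filter (fun e => (fun s => Nat.log 2 (e s)) = j)).card : ℝ) := by
    rw [Finset.card_eq_sum_card_fiberwise hmaps]
    push_cast
    rfl
  have hfib : ∀ j ∈ Rb n, ((S.filter (fun e => (fun s => Nat.log 2 (e s)) = j)).card : ℝ) ≤
      C * ∑ i : Fin 3, ∑ s ∈ Mi i, gj n j * wj i s j := by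
    intro j _
    have hg0 : 0 ≤ gj n j := by unfold gj; split_ifs <;> positivity
    by_cases hjn : ∑ t, j t ≤ n
    · have hsub : ((S.filter (fun e => (fun s => Nat.log 2 (e s)) = j)).card : ℝ) ≤
          (((Bx (fun s => 2 ^ j s)).filter Gd).card : ℝ) := by
        norm_cast
        refine Finset.card_le_card fun e he => ?_
        obtain ⟨he1, he2⟩ := Finset.mem_filter.1 he
        obtain ⟨h1, h2, h3⟩ := hS e he1
        refine Finset.mem_filter.2 ⟨mem_Bx.2 fun s => ?_, h1⟩
        have h4 := congrFun he2 s
        rw [← h4]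
        refine ⟨Nat.pow_log_le_self 2 (by have := h2 s; omega), ?_⟩
        rw [mul_comm, ← pow_succ]
        exact Nat.lt_pow_succ_log_self (by norm_num) _
      refine hsub.trans ?_
      have hMne : ∀ i, (Mi i).Nonempty := by decide
      choose σ hσ hmax using fun i => Finset.exists_max_image (Mi i) j (hMne i)
      obtain ⟨i, -, hi⟩ := Finset.exists_min_image (Finset.univ : Finset (Fin 3)) (fun i => j (σ i)) ⟨0, Finset.mem_univ _⟩
      have h1 := h (fun s => 2 ^ j s) (j (σ i)) (fun _ => Nat.one_le_two_pow)
        (fun i' => ⟨σ i', hσ i', Nat.pow_le_pow_right (by norm_num) (hi i' (Finset.mem_univ _))⟩)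
      refine h1.trans ?_
      have e1 : ∏ s, (((2 ^ j s : ℕ)) : ℝ) = gj n j := by
        unfold gj
        rw [if_pos hjn, ← Finset.prod_pow_eq_pow_sum]
        push_cast
        rfl
      rw [e1, mul_div_assoc]
      refine mul_le_mul_of_nonneg_left ?_ hC.le
      have e2 : gj n j / ((j (σ i) : ℝ) + 1) ^ 3 = gj n j * wj i (σ i) j := by
        unfold wj
        rw [if_pos (hmax i)]
        ring
      rw [e2]
      have hnn : ∀ i s, 0 ≤ gj n j * wj i s j := fun i s => mul_nonneg hg0 (wj_nonneg _ _ _)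
      refine (Finset.single_le_sum (f := fun s => gj n j * wj i s j) (fun s _ => hnn i s) (hσ i)).trans ?_
      exact Finset.single_le_sum (f := fun i => ∑ s ∈ Mi i, gj n j * wj i s j)
        (fun i _ => Finset.sum_nonneg fun s _ => hnn i s) (Finset.mem_univ i)
    · have : S.filter (fun e => (fun s => Nat.log 2 (e s)) = j) = ∅ := by
        refine Finset.filter_eq_empty_iff.2 fun e he hj => hjn ?_
        rw [← hj]
        exact hsum e he
      rw [this, Finset.card_empty, Nat.cast_zero]
      refine mul_nonneg hC.le (Finset.sum_nonneg fun i _ => Finset.sum_nonneg fun s _ => mul_nonneg hg0 (wj_nonneg _ _ _))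
  rw [hcard]
  refine (Finset.sum_le_sum hfib).trans ?_
  rw [← Finset.mul_sum, Finset.sum_comm]
  have h5 : ∀ i : Fin 3, ∑ j ∈ Rb n, ∑ s ∈ Mi i, gj n j * wj i s j ≤ 4 * (2 * 2 ^ n * (n + 1 : ℝ) ^ 3) := by
    intro i
    rw [Finset.sum_comm]
    refine (Finset.sum_le_sum fun s hs => sum_gw n i s hs).trans ?_
    have : (Mi i).card = 4 := by revert i; decide
    rw [Finset.sum_const, this, nsmul_eq_mul]
    norm_num
  have h6 := Finset.sum_le_sum fun i (_ : i ∈ (Finset.univ : Finset (Fin 3))) => h5 i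
  rw [Finset.sum_const, nsmul_eq_mul] at h6
  simp only [Finset.card_univ, Fintype.card_fin] at h6
  calc _ ≤ C * (((3 : ℕ) : ℝ) * (4 * (2 * 2 ^ n * (n + 1 : ℝ) ^ 3))) := by gcongr
    _ = _ := by push_cast; ring


lemma param_core (a b c : ℕ) (ha : 1 ≤ a) (hb : 1 ≤ b) (hc : 1 ≤ c) :
    ∃ g u v w x y z : ℕ, a = g * (u * v * x) ∧ b = g * (u * w * y) ∧ c = g * (v * w * z) ∧
      Nat.Coprime (v * x) (w * y) ∧ Nat.Coprime (u * x) (w * z) ∧ Nat.Coprime (u * y) (v * z) := by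
  obtain ⟨g, hg⟩ : ∃ g, g = Nat.gcd (Nat.gcd a b) c := ⟨_, rfl⟩
  have hg0 : 0 < g := by rw [hg]; exact Nat.gcd_pos_of_pos_right _ hc
  obtain ⟨a', rfl⟩ : g ∣ a := by rw [hg]; exact (Nat.gcd_dvd_left _ _).trans (Nat.gcd_dvd_left _ _)
  obtain ⟨b', rfl⟩ : g ∣ b := by rw [hg]; exact (Nat.gcd_dvd_left _ _).trans (Nat.gcd_dvd_right _ _)
  obtain ⟨c', rfl⟩ : g ∣ c := by rw [hg]; exact Nat.gcd_dvd_right _ _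
  rw [Nat.gcd_mul_left, Nat.gcd_mul_left] at hg
  have h1 : Nat.gcd (Nat.gcd a' b') c' = 1 := by
    have : g * 1 = g * Nat.gcd (Nat.gcd a' b') c' := by rw [mul_one]; exact hg
    exact (Nat.eq_of_mul_eq_mul_left hg0 this).symm
  have ha' : 0 < a' := Nat.pos_of_mul_pos_left ha
  have hb' : 0 < b' := Nat.pos_of_mul_pos_left hb
  have hc' : 0 < c' := Nat.pos_of_mul_pos_left hc
  have hall : ∀ d, d ∣ a' → d ∣ b' → d ∣ c' → d = 1 := by
    intro d h2 h3 h4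
    exact Nat.dvd_one.1 (h1 ▸ Nat.dvd_gcd (Nat.dvd_gcd h2 h3) h4)
  obtain ⟨u, hu⟩ : ∃ u, u = Nat.gcd a' b' := ⟨_, rfl⟩
  obtain ⟨v, hv⟩ : ∃ v, v = Nat.gcd a' c' := ⟨_, rfl⟩
  obtain ⟨w, hw⟩ : ∃ w, w = Nat.gcd b' c' := ⟨_, rfl⟩
  have hua : u ∣ a' := hu ▸ Nat.gcd_dvd_left _ _
  have hub : u ∣ b' := hu ▸ Nat.gcd_dvd_right _ _
  have hva : v ∣ a' := hv ▸ Nat.gcd_dvd_left _ _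
  have hvc : v ∣ c' := hv ▸ Nat.gcd_dvd_right _ _
  have hwb : w ∣ b' := hw ▸ Nat.gcd_dvd_left _ _
  have hwc : w ∣ c' := hw ▸ Nat.gcd_dvd_right _ _
  have huv : Nat.Coprime u v := hall _ ((Nat.gcd_dvd_left _ _).trans hua) ((Nat.gcd_dvd_left _ _).trans hub)
    ((Nat.gcd_dvd_right _ _).trans hvc)
  have huw : Nat.Coprime u w := hall _ ((Nat.gcd_dvd_left _ _).trans hua) ((Nat.gcd_dvd_left _ _).trans hub)
    ((Nat.gcd_dvd_right _ _).trans hwc)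
  have hvw : Nat.Coprime v w := hall _ ((Nat.gcd_dvd_left _ _).trans hva) ((Nat.gcd_dvd_right _ _).trans hwb)
    ((Nat.gcd_dvd_right _ _).trans hwc)
  obtain ⟨x, hx⟩ := huv.mul_dvd_of_dvd_of_dvd hua hva
  obtain ⟨y, hy⟩ := huw.mul_dvd_of_dvd_of_dvd hub hwb
  obtain ⟨z, hz⟩ := hvw.mul_dvd_of_dvd_of_dvd hvc hwc
  have hu0 : 0 < u := Nat.pos_of_dvd_of_pos hua ha'
  have hv0 : 0 < v := Nat.pos_of_dvd_of_pos hva ha'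
  have hw0 : 0 < w := Nat.pos_of_dvd_of_pos hwb hb'
  refine ⟨g, u, v, w, x, y, z, by rw [hx], by rw [hy], by rw [hz], ?_, ?_, ?_⟩
  · refine Nat.eq_of_mul_eq_mul_left hu0 ?_
    rw [← Nat.gcd_mul_left, mul_one, ← mul_assoc, ← mul_assoc, ← hx, ← hy, ← hu]
  · refine Nat.eq_of_mul_eq_mul_left hv0 ?_
    rw [← Nat.gcd_mul_left, mul_one, ← mul_assoc, ← mul_assoc, mul_comm v u, ← hx, ← hz, ← hv]
  · refine Nat.eq_of_mul_eq_mul_left hw0 ?_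
    rw [← Nat.gcd_mul_left, mul_one, ← mul_assoc, ← mul_assoc, mul_comm w u, mul_comm w v, ← hy, ← hz, ← hw]

lemma param_lcm (g u v w x y z m : ℕ) (hg : 0 < g) (hu : 0 < u) (hv : 0 < v) (hw : 0 < w)
    (h1 : g * (u * v * x) ∣ m) (h2 : g * (u * w * y) ∣ m) (h3 : g * (v * w * z) ∣ m)
    (c1 : Nat.Coprime (v * x) (w * y)) (c2 : Nat.Coprime (u * x) (w * z)) (c3 : Nat.Coprime (u * y) (v * z)) :
    g * u * v * w * x * y * z ∣ m := by
  obtain ⟨m1, rfl⟩ : g * u ∣ m := dvd_trans ⟨v * x, by ring⟩ h1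
  have d1 : v * x ∣ m1 := by
    have : (g * u) * (v * x) ∣ (g * u) * m1 := dvd_trans ⟨1, by ring⟩ h1
    exact Nat.dvd_of_mul_dvd_mul_left (Nat.mul_pos hg hu) this
  have d2 : w * y ∣ m1 := by
    have : (g * u) * (w * y) ∣ (g * u) * m1 := dvd_trans ⟨1, by ring⟩ h2
    exact Nat.dvd_of_mul_dvd_mul_left (Nat.mul_pos hg hu) this
  obtain ⟨k, rfl⟩ := c1.mul_dvd_of_dvd_of_dvd d1 d2
  have d3 : z ∣ (u * x * y) * k := by
    have : (g * v * w) * z ∣ (g * v * w) * ((u * x * y) * k) := by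
      refine dvd_trans ⟨1, by ring⟩ (h3.trans ⟨1, by ring⟩)
    exact Nat.dvd_of_mul_dvd_mul_left (Nat.mul_pos (Nat.mul_pos hg hv) hw) this
  have cux : Nat.Coprime z (u * x) := (Nat.Coprime.coprime_mul_left_right c2).symm
  have cuy : Nat.Coprime z (u * y) := (Nat.Coprime.coprime_mul_left_right c3).symm
  have cy : Nat.Coprime z y := Nat.Coprime.coprime_mul_left_right cuy
  have : z ∣ k := (cux.mul_right cy).dvd_of_dvd_mul_left d3
  obtain ⟨k', rfl⟩ := this
  exact ⟨k', by ring⟩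

lemma param (a b c : ℕ) : ∃ e : Fin 7 → ℕ, 1 ≤ a → 1 ≤ b → 1 ≤ c → (∀ s, 1 ≤ e s) ∧
    ∏ s ∈ Mi 0, e s = a ∧ ∏ s ∈ Mi 1, e s = b ∧ ∏ s ∈ Mi 2, e s = c ∧
    (a ≠ b → a ≠ c → b ≠ c → ∀ t, Nat.Coprime (dl t e) (dr t e) ∧ dl t e ≠ dr t e) ∧
    ∏ s, e s ≤ Nat.lcm (Nat.lcm a b) c := by
  by_cases h : 1 ≤ a ∧ 1 ≤ b ∧ 1 ≤ c
  swap
  · exact ⟨fun _ => 0, fun h1 h2 h3 => absurd ⟨h1, h2, h3⟩ h⟩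
  obtain ⟨ha, hb, hc⟩ := h
  obtain ⟨g, u, v, w, x, y, z, h1, h2, h3, c1, c2, c3⟩ := param_core a b c ha hb hc
  refine ⟨![g, u, v, w, x, y, z], fun _ _ _ => ?_⟩
  have hg : 0 < g := Nat.pos_of_ne_zero (by rintro rfl; simp at h1; omega)
  have hu : 0 < u := Nat.pos_of_ne_zero (by rintro rfl; simp at h1; omega)
  have hv : 0 < v := Nat.pos_of_ne_zero (by rintro rfl; simp at h1; omega)
  have hw : 0 < w := Nat.pos_of_ne_zero (by rintro rfl; simp at h2; omega)
  have hx : 0 < x := Nat.pos_of_ne_zero (by rintro rfl; simp at h1; omega)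
  have hy : 0 < y := Nat.pos_of_ne_zero (by rintro rfl; simp at h2; omega)
  have hz : 0 < z := Nat.pos_of_ne_zero (by rintro rfl; simp at h3; omega)
  refine ⟨?_, ?_, ?_, ?_, ?_, ?_⟩
  · intro s; fin_cases s <;> assumption
  · rw [h1]; simp [Mi]; first | done | (left; ring) | ring
  · rw [h2]; simp [Mi]; first | done | (left; ring) | ring
  · rw [h3]; simp [Mi]; first | done | (left; ring) | ring
  · intro hab hac hbc t
    fin_cases t
    · refine ⟨c1, fun hh => hab ?_⟩
      have hh : v * x = w * y := hh
      rw [h1, h2, mul_assoc u, mul_assoc u, hh]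
    · refine ⟨c2, fun hh => hac ?_⟩
      have hh : u * x = w * z := hh
      rw [h1, h3, mul_comm u v, mul_assoc v, mul_assoc v, hh]
    · refine ⟨c3, fun hh => hbc ?_⟩
      have hh : u * y = v * z := hh
      rw [h2, h3, mul_comm u w, mul_comm v w, mul_assoc w, mul_assoc w, hh]
  · have hd := param_lcm g u v w x y z (Nat.lcm (Nat.lcm a b) c) hg hu hv hw
      (h1 ▸ (Nat.dvd_lcm_left a b).trans (Nat.dvd_lcm_left _ _))
      (h2 ▸ (Nat.dvd_lcm_right a b).trans (Nat.dvd_lcm_left _ _))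
      (h3 ▸ (Nat.dvd_lcm_right _ _)) c1 c2 c3
    have hl : 0 < Nat.lcm (Nat.lcm a b) c := Nat.lcm_pos (Nat.lcm_pos ha hb) hc
    refine le_trans (le_of_eq ?_) (Nat.le_of_dvd hl hd)
    simp [Fin.prod_univ_succ]
    ring

lemma pairs_count (X : ℕ) (S : Finset (ℕ × ℕ)) (hS : ∀ t ∈ S, 1 ≤ t.1 ∧ 1 ≤ t.2 ∧ Nat.lcm t.1 t.2 ≤ X) :
    (S.card : ℝ) ≤ X * (1 + Real.log X) ^ 2 := by
  have h1 : S.card ≤ ((Finset.Icc 1 X ×ˢ Finset.Icc 1 X).sigma (fun t => Finset.Icc 1 (X / (t.1 * t.2)))).card := by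
    refine Finset.card_le_card_of_injOn
      (fun t => ⟨(t.1 / Nat.gcd t.1 t.2, t.2 / Nat.gcd t.1 t.2), Nat.gcd t.1 t.2⟩) ?_ ?_
    · rintro ⟨a, b⟩ ht
      obtain ⟨ha, hb, hl⟩ := hS _ ht
      simp only at ha hb hl
      have hg : 0 < Nat.gcd a b := Nat.gcd_pos_of_pos_left _ ha
      obtain ⟨a', ha'⟩ := Nat.gcd_dvd_left a b
      obtain ⟨b', hb'⟩ := Nat.gcd_dvd_right a b
      have e1 : a / Nat.gcd a b = a' := Nat.div_eq_of_eq_mul_right hg ha'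
      have e2 : b / Nat.gcd a b = b' := Nat.div_eq_of_eq_mul_right hg hb'
      have ha0 : 0 < a' := Nat.pos_of_ne_zero (by rintro rfl; simp at ha'; omega)
      have hb0 : 0 < b' := Nat.pos_of_ne_zero (by rintro rfl; simp at hb'; omega)
      have e3 : Nat.lcm a b = Nat.gcd a b * (a' * b') := by
        have h := Nat.gcd_mul_lcm a b
        refine Nat.eq_of_mul_eq_mul_left hg ?_
        rw [h]
        calc a * b = (Nat.gcd a b * a') * (Nat.gcd a b * b') := by rw [← ha', ← hb']
          _ = _ := by ring
      rw [e3] at hl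
      simp only [Finset.coe_sigma, Set.mem_sigma_iff, Finset.mem_coe, Finset.mem_product, Finset.mem_Icc, e1, e2]
      refine ⟨⟨⟨ha0, ?_⟩, ⟨hb0, ?_⟩⟩, hg, ?_⟩
      · refine le_trans ?_ hl
        calc a' = 1 * (a' * 1) := by ring
          _ ≤ _ := Nat.mul_le_mul hg (Nat.mul_le_mul le_rfl hb0)
      · refine le_trans ?_ hl
        calc b' = 1 * (1 * b') := by ring
          _ ≤ _ := Nat.mul_le_mul hg (Nat.mul_le_mul ha0 le_rfl)
      · rw [Nat.le_div_iff_mul_le (Nat.mul_pos ha0 hb0)]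
        exact hl
    · rintro ⟨a, b⟩ _ ⟨c, d⟩ _ h
      simp only [Sigma.mk.injEq, Prod.mk.injEq, heq_eq_eq] at h
      obtain ⟨⟨h1, h2⟩, h3⟩ := h
      rw [← h3] at h1 h2
      have e1 := Nat.div_mul_cancel (Nat.gcd_dvd_left a b)
      have e2 := Nat.div_mul_cancel (Nat.gcd_dvd_right a b)
      have e3 := Nat.div_mul_cancel (Nat.gcd_dvd_left c d)
      have e4 := Nat.div_mul_cancel (Nat.gcd_dvd_right c d)
      rw [← h3] at e3 e4
      rw [Prod.mk.injEq]
      exact ⟨by rw [← e1, ← e3, h1], by rw [← e2, ← e4, h2]⟩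
  rw [Finset.card_sigma] at h1
  have h2 : (S.card : ℝ) ≤ ∑ t ∈ Finset.Icc 1 X ×ˢ Finset.Icc 1 X, (X : ℝ) * ((t.1 : ℝ)⁻¹ * (t.2 : ℝ)⁻¹) := by
    refine le_trans (by exact_mod_cast h1 : (S.card : ℝ) ≤ ((∑ t ∈ Finset.Icc 1 X ×ˢ Finset.Icc 1 X, (Finset.Icc 1 (X / (t.1 * t.2))).card : ℕ) : ℝ)) ?_
    push_cast
    refine Finset.sum_le_sum fun t _ => ?_
    rw [Nat.card_Icc, Nat.add_sub_cancel]
    refine Nat.cast_div_le.trans (le_of_eq ?_)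
    push_cast
    rw [div_eq_mul_inv, mul_inv]
  refine h2.trans ?_
  rw [← Finset.mul_sum, Finset.sum_product]
  dsimp only
  rw [← Finset.sum_mul_sum, ← sq]
  have h3 := harmonic_le_one_add_log X
  rw [harmonic_eq_sum_Icc] at h3
  push_cast at h3
  have h4 : 0 ≤ ∑ i ∈ Finset.Icc 1 X, ((i : ℝ))⁻¹ := Finset.sum_nonneg fun _ _ => by positivity
  gcongr


theorem S3_upper_bound :
    ∃ C : ℝ, C > 0 ∧ ∀ x : ℝ, x ≥ 2 →
      ((((Finset.Icc 1 (⌊x⌋₊ + 1) ×ˢ Finset.Icc 1 (⌊x⌋₊ + 1)) ×ˢ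
            Finset.Icc 1 (⌊x⌋₊ + 1)).filter
          (fun t : (ℕ × ℕ) × ℕ => t.1.1.Prime ∧ t.1.2.Prime ∧ t.2.Prime ∧
            (Nat.lcm (Nat.lcm (t.1.1 - 1) (t.1.2 - 1)) (t.2 - 1) : ℝ) ≤ x)).card : ℝ)
        ≤ C * x * (Real.log x) ^ 3 := by
  obtain ⟨C, hC, hgood⟩ := good_count
  choose e he using param
  have hl2 : 0 < Real.log 2 := Real.log_pos (by norm_num)
  refine ⟨(C + 3) * (2 / Real.log 2) ^ 3, by positivity, fun x hx => ?_⟩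
  have hx0 : 0 ≤ x := by linarith
  set X := ⌊x⌋₊ with hX
  have hXx : (X : ℝ) ≤ x := Nat.floor_le hx0
  have hX2 : 2 ≤ X := Nat.le_floor (by exact_mod_cast hx)
  set F := ((Finset.Icc 1 (X + 1) ×ˢ Finset.Icc 1 (X + 1)) ×ˢ
            Finset.Icc 1 (X + 1)).filter
          (fun t : (ℕ × ℕ) × ℕ => t.1.1.Prime ∧ t.1.2.Prime ∧ t.2.Prime ∧
            (Nat.lcm (Nat.lcm (t.1.1 - 1) (t.1.2 - 1)) (t.2 - 1) : ℝ) ≤ x) with hF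
  have hmem : ∀ t ∈ F, t.1.1.Prime ∧ t.1.2.Prime ∧ t.2.Prime ∧
      Nat.lcm (Nat.lcm (t.1.1 - 1) (t.1.2 - 1)) (t.2 - 1) ≤ X := by
    intro t ht
    obtain ⟨_, h1, h2, h3, h4⟩ := Finset.mem_filter.1 ht
    exact ⟨h1, h2, h3, Nat.le_floor h4⟩
  set D := F.filter (fun t => t.1.1 ≠ t.1.2 ∧ t.1.1 ≠ t.2 ∧ t.1.2 ≠ t.2) with hD
  set A := F.filter (fun t => t.1.1 = t.1.2) with hA
  set B := F.filter (fun t => t.1.1 = t.2) with hB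
  set E := F.filter (fun t => t.1.2 = t.2) with hE
  have hcover : F ⊆ ((D ∪ A) ∪ B) ∪ E := by
    intro t ht
    simp only [hD, hA, hB, hE, Finset.mem_union, Finset.mem_filter, ht, true_and]
    tauto
  have hcard : F.card ≤ D.card + A.card + B.card + E.card := by
    refine (Finset.card_le_card hcover).trans ((Finset.card_union_le _ _).trans ?_)
    gcongr
    refine (Finset.card_union_le _ _).trans ?_
    gcongr
    exact Finset.card_union_le _ _
  -- pair bounds
  have hpair : ∀ (G : Finset ((ℕ × ℕ) × ℕ)) (f : (ℕ × ℕ) × ℕ → ℕ × ℕ), Set.InjOn f G →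
      (∀ t ∈ G, 1 ≤ (f t).1 ∧ 1 ≤ (f t).2 ∧ Nat.lcm (f t).1 (f t).2 ≤ X) →
      (G.card : ℝ) ≤ X * (1 + Real.log X) ^ 2 := by
    intro G f hf h
    rw [← Finset.card_image_of_injOn hf]
    apply pairs_count
    intro s hs
    obtain ⟨t, ht, rfl⟩ := Finset.mem_image.1 hs
    exact h t ht
  have hlc : ∀ t ∈ F, 0 < Nat.lcm (Nat.lcm (t.1.1 - 1) (t.1.2 - 1)) (t.2 - 1) := by
    intro t ht
    obtain ⟨h1, h2, h3, _⟩ := hmem t ht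
    have := h1.two_le
    have := h2.two_le
    have := h3.two_le
    exact Nat.lcm_pos (Nat.lcm_pos (by omega) (by omega)) (by omega)
  have hAc : (A.card : ℝ) ≤ X * (1 + Real.log X) ^ 2 := by
    refine hpair A (fun t => (t.1.1 - 1, t.2 - 1)) ?_ ?_
    · rintro ⟨⟨p, q⟩, r⟩ ht ⟨⟨p', q'⟩, r'⟩ ht' h
      obtain ⟨m, k⟩ := Finset.mem_filter.1 ht
      obtain ⟨m', k'⟩ := Finset.mem_filter.1 ht'
      obtain ⟨h1, h2, h3, _⟩ := hmem _ m
      obtain ⟨h1', h2', h3', _⟩ := hmem _ m'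
      have := h1.two_le
      have := h3.two_le
      have := h1'.two_le
      have := h3'.two_le
      simp only [Prod.mk.injEq] at *
      omega
    · intro t ht
      obtain ⟨m, k⟩ := Finset.mem_filter.1 ht
      obtain ⟨h1, h2, h3, h4⟩ := hmem _ m
      have := h1.two_le
      have := h3.two_le
      refine ⟨by dsimp only; omega, by dsimp only; omega, le_trans (Nat.le_of_dvd (hlc t m) ?_) h4⟩
      exact Nat.lcm_dvd ((Nat.dvd_lcm_left _ _).trans (Nat.dvd_lcm_left _ _)) (Nat.dvd_lcm_right _ _)
  have hBc : (B.card : ℝ) ≤ X * (1 + Real.log X) ^ 2 := by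
    refine hpair B (fun t => (t.1.1 - 1, t.1.2 - 1)) ?_ ?_
    · rintro ⟨⟨p, q⟩, r⟩ ht ⟨⟨p', q'⟩, r'⟩ ht' h
      obtain ⟨m, k⟩ := Finset.mem_filter.1 ht
      obtain ⟨m', k'⟩ := Finset.mem_filter.1 ht'
      obtain ⟨h1, h2, h3, _⟩ := hmem _ m
      obtain ⟨h1', h2', h3', _⟩ := hmem _ m'
      have := h1.two_le
      have := h2.two_le
      have := h1'.two_le
      have := h2'.two_le
      simp only [Prod.mk.injEq] at *
      omega
    · intro t ht
      obtain ⟨m, k⟩ := Finset.mem_filter.1 ht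
      obtain ⟨h1, h2, h3, h4⟩ := hmem _ m
      have := h1.two_le
      have := h2.two_le
      refine ⟨by dsimp only; omega, by dsimp only; omega, le_trans (Nat.le_of_dvd (hlc t m) ?_) h4⟩
      exact Nat.dvd_lcm_left _ _
  have hEc : (E.card : ℝ) ≤ X * (1 + Real.log X) ^ 2 := by
    refine hpair E (fun t => (t.1.1 - 1, t.1.2 - 1)) ?_ ?_
    · rintro ⟨⟨p, q⟩, r⟩ ht ⟨⟨p', q'⟩, r'⟩ ht' h
      obtain ⟨m, k⟩ := Finset.mem_filter.1 ht
      obtain ⟨m', k'⟩ := Finset.mem_filter.1 ht'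
      obtain ⟨h1, h2, h3, _⟩ := hmem _ m
      obtain ⟨h1', h2', h3', _⟩ := hmem _ m'
      have := h1.two_le
      have := h2.two_le
      have := h1'.two_le
      have := h2'.two_le
      simp only [Prod.mk.injEq] at *
      omega
    · intro t ht
      obtain ⟨m, k⟩ := Finset.mem_filter.1 ht
      obtain ⟨h1, h2, h3, h4⟩ := hmem _ m
      have := h1.two_le
      have := h2.two_le
      refine ⟨by dsimp only; omega, by dsimp only; omega, le_trans (Nat.le_of_dvd (hlc t m) ?_) h4⟩
      exact Nat.dvd_lcm_left _ _
  -- distinct triples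
  have hDc : (D.card : ℝ) ≤ C * 2 ^ (Nat.log 2 X) * ((Nat.log 2 X : ℝ) + 1) ^ 3 := by
    have hinj : Set.InjOn (fun t : (ℕ × ℕ) × ℕ => e (t.1.1 - 1) (t.1.2 - 1) (t.2 - 1)) D := by
      rintro ⟨⟨p, q⟩, r⟩ ht ⟨⟨p', q'⟩, r'⟩ ht' h
      obtain ⟨m, k⟩ := Finset.mem_filter.1 ht
      obtain ⟨m', k'⟩ := Finset.mem_filter.1 ht'
      obtain ⟨h1, h2, h3, _⟩ := hmem _ m
      obtain ⟨h1', h2', h3', _⟩ := hmem _ m'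
      have i1 := h1.two_le
      have i2 := h2.two_le
      have i3 := h3.two_le
      have j1 := h1'.two_le
      have j2 := h2'.two_le
      have j3 := h3'.two_le
      dsimp only at i1 i2 i3 j1 j2 j3 h
      obtain ⟨_, a1, a2, a3, _⟩ := he (p - 1) (q - 1) (r - 1) (by omega) (by omega) (by omega)
      obtain ⟨_, b1, b2, b3, _⟩ := he (p' - 1) (q' - 1) (r' - 1) (by omega) (by omega) (by omega)
      rw [h] at a1 a2 a3
      have u1 := a1.symm.trans b1
      have u2 := a2.symm.trans b2
      have u3 := a3.symm.trans b3
      simp only [Prod.mk.injEq]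
      omega
    rw [← Finset.card_image_of_injOn hinj]
    apply hgood X _ (by omega)
    intro s hs
    obtain ⟨⟨⟨p, q⟩, r⟩, ht, rfl⟩ := Finset.mem_image.1 hs
    obtain ⟨m, k1, k2, k3⟩ := Finset.mem_filter.1 ht
    obtain ⟨h1, h2, h3, h4⟩ := hmem _ m
    have i1 := h1.two_le
    have i2 := h2.two_le
    have i3 := h3.two_le
    dsimp only at *
    obtain ⟨c1, a1, a2, a3, c2, c3⟩ := he (p - 1) (q - 1) (r - 1) (by omega) (by omega) (by omega)
    refine ⟨⟨?_, c2 (by omega) (by omega) (by omega)⟩, c1, c3.trans h4⟩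
    intro i
    fin_cases i
    · show (∏ s ∈ Mi 0, e (p - 1) (q - 1) (r - 1) s + 1).Prime
      rw [a1, Nat.sub_add_cancel (by omega)]; exact h1
    · show (∏ s ∈ Mi 1, e (p - 1) (q - 1) (r - 1) s + 1).Prime
      rw [a2, Nat.sub_add_cancel (by omega)]; exact h2
    · show (∏ s ∈ Mi 2, e (p - 1) (q - 1) (r - 1) s + 1).Prime
      rw [a3, Nat.sub_add_cancel (by omega)]; exact h3
  -- final numerics
  set L := 2 / Real.log 2 * Real.log x with hL
  have hlx : Real.log 2 ≤ Real.log x := Real.log_le_log (by norm_num) hx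
  have hX0 : (0 : ℝ) < X := by exact_mod_cast (by omega : 0 < X)
  have hlX : Real.log X ≤ Real.log x := Real.log_le_log hX0 hXx
  have hlX0 : 0 ≤ Real.log X := Real.log_nonneg (by exact_mod_cast (by omega : 1 ≤ X))
  have hpow : ((2 : ℝ)) ^ (Nat.log 2 X) ≤ X := by
    exact_mod_cast Nat.pow_log_le_self 2 (by omega)
  have hratio : 1 ≤ Real.log x / Real.log 2 := by rwa [one_le_div hl2]
  have hLe : L = Real.log x / Real.log 2 + Real.log x / Real.log 2 := by rw [hL]; ring
  have hn : (Nat.log 2 X : ℝ) ≤ Real.log x / Real.log 2 := by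
    rw [le_div_iff₀ hl2, ← Real.log_pow]
    exact (Real.log_le_log (by positivity) hpow).trans hlX
  have hn1 : (Nat.log 2 X : ℝ) + 1 ≤ L := by linarith
  have hl21 : Real.log 2 ≤ 1 := by linarith [Real.log_two_lt_d9]
  have hlog : 1 + Real.log X ≤ L := by
    have : Real.log x ≤ Real.log x / Real.log 2 := by
      rw [le_div_iff₀ hl2]
      nlinarith
    linarith
  have hL1 : 1 ≤ L := by linarith
  have t1 : C * 2 ^ (Nat.log 2 X) * ((Nat.log 2 X : ℝ) + 1) ^ 3 ≤ C * x * L ^ 3 := by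
    have := hpow.trans hXx
    gcongr
  have t2 : (X : ℝ) * (1 + Real.log X) ^ 2 ≤ x * L ^ 3 := by
    have : (1 + Real.log X) ^ 2 ≤ L ^ 2 := by gcongr
    have h23 : L ^ 2 ≤ L ^ 3 := pow_le_pow_right₀ hL1 (by norm_num)
    have := this.trans h23
    gcongr
  have hcardR : (F.card : ℝ) ≤ D.card + A.card + B.card + E.card := by exact_mod_cast hcard
  have hfin : (C + 3) * (2 / Real.log 2) ^ 3 * x * Real.log x ^ 3 = C * x * L ^ 3 + 3 * (x * L ^ 3) := by
    rw [hL]; ring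
  rw [hfin]
  linarith
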